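/- arXiv:1710.03635 — 2 statements merged into one kernel-verified Lean document; each statement's English description precedes it below -/
import Mathlib

section
/- Let T be a complete discrete valuation ring whose residue field has characteristic p > 0, and let K be its fraction field. Then there exists a Galois field extension E_P of Frac(T⟦x⟧) of degree p such that no field extension E of the rational function field K(x) with [E : K(x)] = p satisfies E ⊗_{K(x)} Frac(T⟦x⟧) ≅ E_P as Frac(T⟦x⟧)-algebras. -/
namespace PGC

open Polynomial

/-- Lacunary power series `∑ x^(p*j!+1)`. -/
noncomputable def lac (p : ℕ) (R : Type) [CommRing R] : PowerSeries R :=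
  open Classical in PowerSeries.mk fun n => if ∃ j : ℕ, n = p * j.factorial + 1 then 1 else 0

theorem map_lac (p : ℕ) {R S : Type} [CommRing R] [CommRing S] (f : R →+* S) :
    PowerSeries.map f (lac p R) = lac p S := by
  classical
  ext n
  simp only [lac, PowerSeries.coeff_map, PowerSeries.coeff_mk]
  split_ifs <;> simp

theorem lac_gap (p : ℕ) (hp : 0 < p) (R : Type) [CommRing R] (N : ℕ) :
    PowerSeries.X ^ (p * (N+1).factorial + 1) ∣
      lac p R - ((PowerSeries.trunc (p * N.factorial + 2) (lac p R) : R[X]) : PowerSeries R) := by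
  classical
  rw [PowerSeries.X_pow_dvd_iff]
  intro m hm
  simp only [map_sub, lac, Polynomial.coeff_coe, PowerSeries.coeff_trunc, PowerSeries.coeff_mk]
  by_cases h : m < p * N.factorial + 2
  · simp [h]
  · rw [if_neg h, sub_zero, if_neg]
    rintro ⟨j, rfl⟩
    have h1 : j.factorial < (N+1).factorial := by
      have : p * j.factorial < p * (N+1).factorial := by omega
      exact lt_of_mul_lt_mul_left this (Nat.zero_le _)
    have h2 : N.factorial < j.factorial := by
      have : p * N.factorial < p * j.factorial := by omega
      exact lt_of_mul_lt_mul_left this (Nat.zero_le _)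
    have h3 : j < N + 1 := by
      by_contra hh
      exact absurd (Nat.factorial_le (not_lt.mp hh)) (not_le.mpr h1)
    have h4 : N < j := by
      by_contra hh
      exact absurd (Nat.factorial_le (not_lt.mp hh)) (not_le.mpr h2)
    omega

theorem lac_trunc_natDegree (p : ℕ) (R : Type) [CommRing R] [Nontrivial R] (N : ℕ) :
    (PowerSeries.trunc (p * N.factorial + 2) (lac p R)).natDegree = p * N.factorial + 1 := by
  classical
  apply le_antisymm
  · have := PowerSeries.natDegree_trunc_lt (lac p R) (p * N.factorial + 1)
    exact Nat.lt_succ_iff.mp this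
  · apply Polynomial.le_natDegree_of_ne_zero
    rw [PowerSeries.coeff_trunc, if_pos (by omega), lac, PowerSeries.coeff_mk, if_pos ⟨N, rfl⟩]
    exact one_ne_zero

theorem natDegree_eval_le {k : Type} [Field k] (Q : k[X][X]) :
    ∃ C : ℕ, ∀ a : k[X], (Q.eval a).natDegree ≤ C + Q.natDegree * a.natDegree := by
  refine ⟨Q.support.sup fun i => (Q.coeff i).natDegree, fun a => ?_⟩
  rw [Polynomial.eval_eq_sum, Polynomial.sum]
  apply Polynomial.natDegree_sum_le_of_forall_le
  intro i hi
  refine Polynomial.natDegree_mul_le.trans ?_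
  apply add_le_add
  · exact Finset.le_sup (f := fun i => (Q.coeff i).natDegree) hi
  · exact Polynomial.natDegree_pow_le.trans
      (Nat.mul_le_mul_right _ (Polynomial.le_natDegree_of_mem_supp _ hi))

theorem lac_transcendental (p : ℕ) (hp : 0 < p) (k : Type) [Field k] :
    Transcendental k[X] (lac p k) := by
  rw [transcendental_iff]
  intro Q hQ
  by_contra hne
  obtain ⟨C, hC⟩ := natDegree_eval_le Q
  set a : ℕ → k[X] := fun N => PowerSeries.trunc (p * N.factorial + 2) (lac p k) with ha
  have hdeg : ∀ N, (a N).natDegree = p * N.factorial + 1 := lac_trunc_natDegree p k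
  have hroot : ∀ N, C + 2 * Q.natDegree ≤ N → Q.eval (a N) = 0 := by
    intro N hN
    have h1 : PowerSeries.X ^ (p * (N+1).factorial + 1) ∣ ((Q.eval (a N) : k[X]) : PowerSeries k) := by
      have h2 : (aeval (lac p k) Q) - aeval ((a N : k[X]) : PowerSeries k) Q =
          - ((Q.eval (a N) : k[X]) : PowerSeries k) := by
        rw [hQ, zero_sub]
        congr 1
        have := Polynomial.aeval_algebraMap_apply (PowerSeries k) (a N) Q
        rw [Polynomial.coe_aeval_eq_eval] at this
        exact this
      have h3 := Polynomial.sub_dvd_eval_sub (lac p k) ((a N : k[X]) : PowerSeries k)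
        (Q.map (algebraMap k[X] (PowerSeries k)))
      rw [Polynomial.eval_map_algebraMap, Polynomial.eval_map_algebraMap, h2, dvd_neg] at h3
      exact (lac_gap p hp k N).trans h3
    by_contra hne0
    have h2 : (Q.eval (a N)).natDegree < p * (N+1).factorial + 1 := by
      refine lt_of_le_of_lt (hC (a N)) ?_
      rw [hdeg, Nat.factorial_succ]
      have : 1 ≤ p * N.factorial := Nat.mul_pos hp (Nat.factorial_pos N)
      nlinarith [Nat.mul_le_mul hN this, Nat.mul_le_mul_left C this,
        Nat.mul_le_mul_left Q.natDegree this, Nat.mul_le_mul_right (p * N.factorial) hN]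
    rw [PowerSeries.X_pow_dvd_iff] at h1
    have h4 := h1 _ h2
    rw [Polynomial.coeff_coe] at h4
    exact hne0 (Polynomial.leadingCoeff_eq_zero.mp h4)
  have hinj : Function.Injective (fun n => a (n + 1 + (C + 2 * Q.natDegree))) := by
    intro m n h
    have := congrArg Polynomial.natDegree h
    simp only [hdeg] at this
    have h5 : (m + 1 + (C + 2 * Q.natDegree)).factorial = (n + 1 + (C + 2 * Q.natDegree)).factorial :=
      Nat.eq_of_mul_eq_mul_left hp (by omega)
    by_contra hmn
    rcases lt_or_gt_of_ne hmn with h7 | h7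
    · exact absurd h5 (ne_of_lt ((Nat.factorial_lt (by omega)).mpr (by omega)))
    · exact absurd h5.symm (ne_of_lt ((Nat.factorial_lt (by omega)).mpr (by omega)))
  have hfin : Set.Finite {x : k[X] | Q.IsRoot x} := Polynomial.finite_setOfPred_isRoot hne
  exact Set.infinite_of_injective_forall_mem hinj (fun n => hroot _ (by omega)) hfin

theorem exists_primitive {T : Type} [CommRing T] [IsDomain T] [IsDiscreteValuationRing T]
    {A : Type} [CommRing A] [IsDomain A] [Algebra T[X] A]
    (hinj : Function.Injective (algebraMap T[X] A)) (u : A) (hu : IsAlgebraic T[X] u) :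
    ∃ Q : T[X][X], aeval u Q = 0 ∧
      Q.map (Polynomial.mapRingHom (IsLocalRing.residue T)) ≠ 0 := by
  obtain ⟨Q, hQ0, hQ⟩ := hu
  obtain ⟨π, hπ⟩ := IsDiscreteValuationRing.exists_irreducible T
  have hnu : ¬ IsUnit (C (C π) : T[X][X]) := by
    rw [Polynomial.isUnit_C, Polynomial.isUnit_C]; exact hπ.not_isUnit
  obtain ⟨n, b, hb, rfl⟩ := WfDvdMonoid.max_power_factor' hQ0 hnu
  refine ⟨b, ?_, ?_⟩
  · rw [map_mul, map_pow, aeval_C] at hQ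
    rcases mul_eq_zero.mp hQ with h | h
    · exfalso
      have h := eq_zero_of_pow_eq_zero h
      rw [map_eq_zero_iff _ hinj, C_eq_zero] at h
      exact hπ.ne_zero h
    · exact h
  · intro h0
    apply hb
    rw [Polynomial.C_dvd_iff_dvd_coeff]
    intro i
    rw [Polynomial.C_dvd_iff_dvd_coeff]
    intro j
    have := congrArg (fun q => (q.coeff i).coeff j) h0
    simp only [coeff_map, coe_mapRingHom, coeff_zero] at this
    rw [IsLocalRing.residue_eq_zero_iff, hπ.maximalIdeal_eq, Ideal.mem_span_singleton] at this
    exact this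

theorem reduction_algebraic {T : Type} [CommRing T] [IsDomain T] [IsDiscreteValuationRing T]
    (u : FractionRing (PowerSeries T)) (hu : IsAlgebraic T[X] u) (f g : PowerSeries T)
    (hg : PowerSeries.map (IsLocalRing.residue T) g ≠ 0)
    (h : u * algebraMap _ _ g = algebraMap _ _ f) :
    IsAlgebraic (IsLocalRing.ResidueField T)[X]
      (algebraMap _ (FractionRing (PowerSeries (IsLocalRing.ResidueField T)))
        (PowerSeries.map (IsLocalRing.residue T) f) /
       algebraMap _ (FractionRing (PowerSeries (IsLocalRing.ResidueField T)))
        (PowerSeries.map (IsLocalRing.residue T) g)) := by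
  have hinj : Function.Injective (algebraMap T[X] (FractionRing (PowerSeries T))) := by
    rw [IsScalarTower.algebraMap_eq T[X] (PowerSeries T) (FractionRing (PowerSeries T))]
    rw [RingHom.coe_comp]
    exact (IsFractionRing.injective (PowerSeries T) (FractionRing (PowerSeries T))).comp
      (Polynomial.coe_injective T)
  obtain ⟨Q, hQ, hQ0⟩ := exists_primitive hinj u hu
  refine ⟨_, hQ0, ?_⟩
  set k := IsLocalRing.ResidueField T
  set d := Q.natDegree
  have e1 : ∑ i ∈ Finset.range (d+1), ((Q.coeff i : T[X]) : PowerSeries T) * f ^ i * g ^ (d - i) = 0 := by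
    apply IsFractionRing.injective (PowerSeries T) (FractionRing (PowerSeries T))
    rw [map_zero, map_sum]
    have : (algebraMap _ (FractionRing (PowerSeries T)) g)^d * aeval u Q = 0 := by rw [hQ, mul_zero]
    rw [aeval_eq_sum_range, Finset.mul_sum] at this
    rw [← this]
    apply Finset.sum_congr rfl
    intro i hi
    have hi' : i ≤ d := by simpa [Nat.lt_succ_iff] using hi
    rw [Algebra.smul_def, IsScalarTower.algebraMap_apply T[X] (PowerSeries T) (FractionRing (PowerSeries T))]
    rw [map_mul, map_mul, map_pow, map_pow, ← h]
    obtain ⟨e, he⟩ := Nat.exists_eq_add_of_le hi'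
    rw [he, Nat.add_sub_cancel_left]
    change (algebraMap (PowerSeries T) (FractionRing (PowerSeries T))) (algebraMap T[X] _ (Q.coeff i)) * _ * _ = _
    ring
  have e2 := congrArg (PowerSeries.map (IsLocalRing.residue T)) e1
  rw [map_zero, map_sum] at e2
  set f' := PowerSeries.map (IsLocalRing.residue T) f
  set g' := PowerSeries.map (IsLocalRing.residue T) g
  set G := algebraMap _ (FractionRing (PowerSeries k)) g' with hG
  set Fr := algebraMap _ (FractionRing (PowerSeries k)) f' with hFr
  have hGne : G ≠ 0 := by
    rw [hG, Ne, map_eq_zero_iff _ (IsFractionRing.injective _ _)]; exact hg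
  have e3 := congrArg (algebraMap _ (FractionRing (PowerSeries k))) e2
  rw [map_zero, map_sum] at e3
  have e4 : G ^ d * aeval (Fr / G) (Q.map (Polynomial.mapRingHom (IsLocalRing.residue T))) = 0 := by
    rw [aeval_eq_sum_range' (n := d+1) (Nat.lt_succ_of_le natDegree_map_le), Finset.mul_sum, ← e3]
    apply Finset.sum_congr rfl
    intro i hi
    have hi' : i ≤ d := by simpa [Nat.lt_succ_iff] using hi
    rw [Algebra.smul_def, IsScalarTower.algebraMap_apply k[X] (PowerSeries k) (FractionRing (PowerSeries k))]
    rw [map_mul, map_mul, map_pow, map_pow, map_mul, map_mul, map_pow, map_pow]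
    obtain ⟨e, he⟩ := Nat.exists_eq_add_of_le hi'
    rw [he, Nat.add_sub_cancel_left, div_pow, coeff_map]
    have : PowerSeries.map (IsLocalRing.residue T) ((Q.coeff i : T[X]) : PowerSeries T) =
      algebraMap k[X] (PowerSeries k) ((mapRingHom (IsLocalRing.residue T)) (Q.coeff i)) := by
      ext n
      change _ = PowerSeries.coeff n ((((Q.coeff i).map (IsLocalRing.residue T)) : k[X]) : PowerSeries k)
      simp
    rw [this]
    field_simp
    ring
  exact (mul_eq_zero.mp e4).resolve_left (pow_ne_zero _ hGne)

theorem lac_not_alg (p : ℕ) (hp : 0 < p) (k : Type) [Field k] :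
    ¬ IsAlgebraic k[X] (algebraMap _ (FractionRing (PowerSeries k)) (lac p k)) := by
  have := lac_transcendental p hp k
  rwa [← transcendental_algebraMap_iff (S := PowerSeries k) (A := FractionRing (PowerSeries k))
    (IsFractionRing.injective _ _)] at this

end PGC

namespace PGC

open Polynomial

/-- projection to exponents divisible by `q` -/
noncomputable def prj (q : ℕ) {T : Type} [CommRing T] (f : PowerSeries T) : PowerSeries T :=
  PowerSeries.mk fun n => if q ∣ n then PowerSeries.coeff n f else 0

theorem coeff_prj (q : ℕ) {T : Type} [CommRing T] (f : PowerSeries T) (n : ℕ) :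
    PowerSeries.coeff n (prj q f) = if q ∣ n then PowerSeries.coeff n f else 0 := by
  simp [prj]

theorem prj_add (q : ℕ) {T : Type} [CommRing T] (f g : PowerSeries T) :
    prj q (f + g) = prj q f + prj q g := by
  ext n
  simp only [coeff_prj, map_add]
  split_ifs <;> simp

theorem prj_smul (q : ℕ) {T : Type} [CommRing T] (c : T) (f : PowerSeries T) :
    prj q (PowerSeries.C c * f) = PowerSeries.C c * prj q f := by
  ext n
  simp only [coeff_prj, PowerSeries.coeff_C_mul]
  split_ifs <;> simp

theorem prj_mul (q : ℕ) {T : Type} [CommRing T] (f g : PowerSeries T) (hg : prj q g = g) :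
    prj q (g * f) = g * prj q f := by
  have hg' : ∀ n, ¬ q ∣ n → PowerSeries.coeff n g = 0 := by
    intro n hn
    have := congrArg (PowerSeries.coeff n) hg
    rw [coeff_prj, if_neg hn] at this
    exact this.symm
  ext n
  rw [coeff_prj, PowerSeries.coeff_mul, PowerSeries.coeff_mul]
  split_ifs with h
  · apply Finset.sum_congr rfl
    rintro ⟨i, j⟩ hij
    rw [Finset.HasAntidiagonal.mem_antidiagonal] at hij
    simp only at hij ⊢
    rw [coeff_prj]
    by_cases hi : q ∣ i
    · rw [if_pos ((Nat.dvd_add_right hi).mp (hij ▸ h))]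
    · rw [hg' i hi, zero_mul, zero_mul]
  · symm
    apply Finset.sum_eq_zero
    rintro ⟨i, j⟩ hij
    rw [Finset.HasAntidiagonal.mem_antidiagonal] at hij
    simp only at hij ⊢
    rw [coeff_prj]
    by_cases hi : q ∣ i
    · rw [if_neg, mul_zero]
      intro hj
      exact h (hij ▸ dvd_add hi hj)
    · rw [hg' i hi, zero_mul]

theorem coeff_pow_char {p : ℕ} [hp : Fact p.Prime] {T : Type} [CommRing T] [CharP T p]
    (g : PowerSeries T) (n : ℕ) :
    PowerSeries.coeff n (g ^ p) = if p ∣ n then (PowerSeries.coeff (n / p) g) ^ p else 0 := by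
  have h : (PowerSeries.map (frobenius T p)) (PowerSeries.expand p hp.out.ne_zero g) = g ^ p :=
    MvPowerSeries.map_frobenius_expand p hp.out.ne_zero (f := g)
  rw [← h, PowerSeries.coeff_map, PowerSeries.coeff_expand]
  split_ifs
  · rfl
  · simp

theorem prj_char {p : ℕ} [hp : Fact p.Prime] {T : Type} [CommRing T] [CharP T p]
    (q : ℕ) (f : PowerSeries T) : prj (q * p) (f ^ p) = (prj q f) ^ p := by
  have hp0 := hp.out.pos
  ext n
  rw [coeff_prj, coeff_pow_char, coeff_pow_char, coeff_prj]
  by_cases h : p ∣ n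
  · obtain ⟨m, rfl⟩ := h
    have hd : p ∣ p * m := ⟨m, rfl⟩
    rw [if_pos hd, if_pos hd, Nat.mul_div_cancel_left _ hp0]
    have : q * p ∣ p * m ↔ q ∣ m := by
      rw [mul_comm q p]; exact Nat.mul_dvd_mul_iff_left hp0
    by_cases h2 : q ∣ m
    · rw [if_pos (this.mpr h2), if_pos h2]
    · rw [if_neg (fun h => h2 (this.mp h)), if_neg h2, zero_pow hp.out.ne_zero]
  · rw [if_neg h]; simp [h]

theorem prj_one {T : Type} [CommRing T] (f : PowerSeries T) : prj 1 f = f := by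
  ext n; simp [coeff_prj]

theorem prj_pow {p : ℕ} [hp : Fact p.Prime] {T : Type} [CommRing T] [CharP T p]
    (m : ℕ) (f : PowerSeries T) : prj (p^m) (f ^ p^m) = f ^ p^m := by
  induction m with
  | zero => simp [prj_one]
  | succ m ih => rw [pow_succ, pow_mul, prj_char, ih]

theorem prj_poly (q : ℕ) {T : Type} [CommRing T] (f : T[X]) :
    ∃ g : T[X], prj q (f : PowerSeries T) = g := by
  refine ⟨PowerSeries.trunc (f.natDegree + 1) (prj q (f : PowerSeries T)), ?_⟩
  ext n
  rw [Polynomial.coeff_coe, PowerSeries.coeff_trunc]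
  split_ifs with h
  · rfl
  · rw [coeff_prj, Polynomial.coeff_coe, Polynomial.coeff_eq_zero_of_natDegree_lt (by omega)]
    simp

section
variable {p : ℕ} [hp : Fact p.Prime] {T : Type} [CommRing T] [IsDomain T] [CharP T p]

local notation "FF" => FractionRing (PowerSeries T)
local notation "AA" => algebraMap (PowerSeries T) (FractionRing (PowerSeries T))

theorem AA_ne {g : PowerSeries T} (hg : g ≠ 0) : AA g ≠ 0 := by
  rwa [Ne, map_eq_zero_iff _ (IsFractionRing.injective _ _)]

theorem rep (q : ℕ) (hq : 0 < q) (u : FF) : ∃ f g : PowerSeries T, g ≠ 0 ∧ u = AA f / AA g ^ q := by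
  obtain ⟨f, g, hg, rfl⟩ := IsFractionRing.div_surjective (A := PowerSeries T) u
  have hg0 := nonZeroDivisors.ne_zero hg
  refine ⟨f * g ^ (q - 1), g, hg0, ?_⟩
  have := AA_ne hg0
  obtain ⟨q, rfl⟩ := Nat.exists_eq_succ_of_ne_zero hq.ne'
  simp only [map_mul, map_pow, Nat.succ_eq_add_one, Nat.add_sub_cancel]
  field_simp
  try ring

open Classical in
/-- extension of `prj` to the fraction field -/
noncomputable def prjF (q : ℕ) (u : FF) : FF :=
  if hq : 0 < q then
    AA (prj q (rep q hq u).choose) / AA ((rep q hq u).choose_spec.choose) ^ q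
  else 0

theorem prjF_eq (m : ℕ) (f g : PowerSeries T) (hg : g ≠ 0) :
    prjF (p^m) (AA f / AA g ^ p^m) = AA (prj (p^m) f) / AA g ^ p^m := by
  have hq : 0 < p^m := pow_pos hp.out.pos m
  rw [prjF, dif_pos hq]
  have h := rep (p^m) hq (AA f / AA g ^ p^m)
  suffices aux : ∀ f' g' : PowerSeries T, g' ≠ 0 → AA f / AA g ^ p^m = AA f' / AA g' ^ p^m →
      AA (prj (p^m) f') / AA g' ^ p^m = AA (prj (p^m) f) / AA g ^ p^m from
    aux _ _ h.choose_spec.choose_spec.1 h.choose_spec.choose_spec.2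
  intro f' g' h1 h2
  have a1 := AA_ne hg
  have a2 := AA_ne h1
  rw [div_eq_div_iff (pow_ne_zero _ a1) (pow_ne_zero _ a2)] at h2
  rw [div_eq_div_iff (pow_ne_zero _ a2) (pow_ne_zero _ a1)]
  rw [← map_pow, ← map_pow, ← map_mul, ← map_mul] at h2 ⊢
  congr 1
  have h3 := IsFractionRing.injective _ _ h2
  have h4 := congrArg (prj (p^m)) h3
  rw [mul_comm f, mul_comm f', prj_mul _ _ _ (prj_pow m g'), prj_mul _ _ _ (prj_pow m g)] at h4
  rw [mul_comm, ← h4, mul_comm]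

theorem prjF_add (m : ℕ) (u v : FF) : prjF (p^m) (u + v) = prjF (p^m) u + prjF (p^m) v := by
  have hq : 0 < p^m := pow_pos hp.out.pos m
  obtain ⟨f, g, hg, rfl⟩ := rep _ hq u
  obtain ⟨f', g', hg', rfl⟩ := rep _ hq v
  have a1 := AA_ne hg
  have a2 := AA_ne hg'
  have : AA f / AA g ^ p^m + AA f' / AA g' ^ p^m =
      AA (g' ^ p^m * f + g ^ p^m * f') / AA (g * g') ^ p^m := by
    simp only [map_add, map_mul, map_pow]
    try simp only [mul_pow, div_pow]
    field_simp
  rw [this, prjF_eq _ _ _ (mul_ne_zero hg hg'), prjF_eq _ _ _ hg, prjF_eq _ _ _ hg', prj_add,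
    prj_mul _ _ _ (prj_pow m g'), prj_mul _ _ _ (prj_pow m g)]
  simp only [map_add, map_mul, map_pow, mul_pow]
  field_simp

theorem prjF_mul (m : ℕ) (u v : FF) : prjF (p^m) (u ^ p^m * v) = u ^ p^m * prjF (p^m) v := by
  have hq : 0 < p^m := pow_pos hp.out.pos m
  obtain ⟨f, g, hg, rfl⟩ := IsFractionRing.div_surjective (A := PowerSeries T) u
  have hg := nonZeroDivisors.ne_zero hg
  obtain ⟨f', g', hg', rfl⟩ := rep _ hq v
  have a1 := AA_ne hg
  have a2 := AA_ne hg'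
  have : (AA f / AA g) ^ p^m * (AA f' / AA g' ^ p^m) =
      AA (f ^ p^m * f') / AA (g * g') ^ p^m := by
    simp only [map_mul, map_pow]
    try simp only [mul_pow, div_pow]
    field_simp
  rw [this, prjF_eq _ _ _ (mul_ne_zero hg hg'), prjF_eq _ _ _ hg', 
    prj_mul _ _ _ (prj_pow m f)]
  simp only [map_mul, map_pow, mul_pow, div_pow]
  field_simp

theorem prjF_frob (m : ℕ) (u : FF) : prjF (p^(m+1)) (u ^ p) = (prjF (p^m) u) ^ p := by
  have hq : 0 < p^m := pow_pos hp.out.pos m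
  obtain ⟨f, g, hg, rfl⟩ := rep _ hq u
  have : (AA f / AA g ^ p^m) ^ p = AA (f ^ p) / AA g ^ p^(m+1) := by
    rw [div_pow, map_pow, pow_succ, pow_mul]
  rw [this, prjF_eq _ _ _ hg, prjF_eq _ _ _ hg, pow_succ, prj_char, div_pow, map_pow, pow_mul]

theorem prjF_sum (m : ℕ) {ι : Type} (s : Finset ι) (u : ι → FF) :
    prjF (p^m) (∑ i ∈ s, u i) = ∑ i ∈ s, prjF (p^m) (u i) := by
  have h0 : prjF (p^m) (0 : FF) = 0 := by
    have := prjF_add (p := p) m (0 : FF) 0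
    simpa using this
  classical
  induction s using Finset.induction_on with
  | empty => simp [h0]
  | insert a s ha ih => rw [Finset.sum_insert ha, Finset.sum_insert ha, prjF_add, ih]

theorem prjF_base {F0 : Type} [Field F0] [Algebra T[X] F0] [IsFractionRing T[X] F0]
    [Algebra F0 FF] [IsScalarTower T[X] F0 FF] (m : ℕ) (r : F0) :
    IsAlgebraic T[X] (prjF (p^m) (algebraMap F0 FF r)) := by
  obtain ⟨f, g, hg, rfl⟩ := IsFractionRing.div_surjective (A := T[X]) r
  have hg := nonZeroDivisors.ne_zero hg
  have hg' : (g : PowerSeries T) ≠ 0 := by simpa using hg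
  rw [map_div₀, ← IsScalarTower.algebraMap_apply, ← IsScalarTower.algebraMap_apply,
    IsScalarTower.algebraMap_apply T[X] (PowerSeries T) FF,
    IsScalarTower.algebraMap_apply T[X] (PowerSeries T) FF]
  have e : AA (algebraMap T[X] (PowerSeries T) f) / AA (algebraMap T[X] (PowerSeries T) g) =
      AA ((f * g ^ (p^m - 1) : T[X]) : PowerSeries T) / AA (g : PowerSeries T) ^ p^m := by
    have hq : 0 < p^m := pow_pos hp.out.pos m
    obtain ⟨q, hq⟩ := Nat.exists_eq_succ_of_ne_zero hq.ne'
    change AA (f : PowerSeries T) / AA (g : PowerSeries T) = _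
    have := AA_ne hg'
    rw [hq]
    simp only [Polynomial.coe_mul, Polynomial.coe_pow, map_mul, map_pow, Nat.succ_eq_add_one, Nat.add_sub_cancel]
    field_simp
    ring
  rw [e, prjF_eq _ _ _ hg']
  obtain ⟨h, hh⟩ := prj_poly (p^m) (f * g ^ (p^m - 1))
  rw [hh]
  have alg : ∀ c : T[X], IsAlgebraic T[X] (AA (c : PowerSeries T)) := fun c => by
    have := isAlgebraic_algebraMap (R := T[X]) (A := FF) c
    rwa [IsScalarTower.algebraMap_apply T[X] (PowerSeries T) FF] at this
  rw [div_eq_mul_inv]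
  exact (alg h).mul ((alg g).pow _).inv

theorem prjF_sep {F0 : Type} [Field F0] [Algebra T[X] F0] [IsFractionRing T[X] F0]
    [Algebra F0 FF] [IsScalarTower T[X] F0 FF] [CharP F0 p] (m : ℕ) (b : FF) (hb : IsSeparable F0 b) :
    IsAlgebraic T[X] (prjF (p^m) b) := by
  have hba : IsAlgebraic F0 b := hb.isIntegral.isAlgebraic
  have : ExpChar F0 p := ExpChar.prime hp.out
  have h1 := IntermediateField.adjoin_simple_eq_adjoin_pow_expChar_pow_of_isSeparable F0 FF hb p m
  have h2 : b ∈ IntermediateField.adjoin F0 {b ^ p^m} := by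
    rw [← h1]; exact IntermediateField.mem_adjoin_simple_self F0 b
  rw [← IntermediateField.mem_toSubalgebra,
    IntermediateField.adjoin_simple_toSubalgebra_of_isAlgebraic (hba.pow _),
    Algebra.adjoin_singleton_eq_range_aeval] at h2
  obtain ⟨R, hR⟩ := h2
  have hR : aeval (b ^ p^m) R = b := hR
  have hba' : IsAlgebraic T[X] b := (IsFractionRing.isAlgebraic_iff T[X] F0 FF).mpr hba
  have e : prjF (p^m) b = ∑ i ∈ Finset.range (R.natDegree + 1),
      (b ^ i) ^ p^m * prjF (p^m) (algebraMap F0 FF (R.coeff i)) := by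
    conv_lhs => rw [← hR, aeval_eq_sum_range, prjF_sum]
    apply Finset.sum_congr rfl
    intro i _
    rw [Algebra.smul_def, mul_comm, ← pow_mul, mul_comm (p^m) i, pow_mul, prjF_mul]
  rw [e]
  have : ∀ s : Finset ℕ, IsAlgebraic T[X] (∑ i ∈ s,
      (b ^ i) ^ p^m * prjF (p^m) (algebraMap F0 FF (R.coeff i))) := by
    classical
    intro s
    induction s using Finset.induction_on with
    | empty => simpa using isAlgebraic_zero
    | insert a s ha ih =>
      rw [Finset.sum_insert ha]
      exact (((hba'.pow _).pow _).mul (prjF_base m _)).add ih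
  exact this _

end

theorem prj_lac (p : ℕ) [hp : Fact p.Prime] (T : Type) [CommRing T] (m : ℕ) :
    prj (p^(m+1)) (lac p T) = 0 := by
  classical
  ext n
  rw [coeff_prj, lac, PowerSeries.coeff_mk]
  split_ifs with h1 h2
  · obtain ⟨j, rfl⟩ := h2
    exfalso
    have : p ∣ p * j.factorial + 1 := (dvd_pow_self p (Nat.succ_ne_zero m)).trans h1
    have := (Nat.dvd_add_right ⟨_, rfl⟩).mp this
    exact hp.out.one_lt.ne' (Nat.dvd_one.mp this)
  · rfl
  · rfl


theorem factor_C {T : Type} [CommRing T] [IsDomain T] [IsDiscreteValuationRing T] {t : T}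
    (ht : Irreducible t) (g : PowerSeries T) (hg : g ≠ 0) : ∃ (n : ℕ) (g0 : PowerSeries T),
      PowerSeries.map (IsLocalRing.residue T) g0 ≠ 0 ∧ g = PowerSeries.C t ^ n * g0 := by
  have hnu : ¬ IsUnit (PowerSeries.C t) := by
    intro h
    have := h.map (PowerSeries.constantCoeff (R := T))
    rw [PowerSeries.constantCoeff_C] at this
    exact ht.not_isUnit this
  obtain ⟨n, b, hb, rfl⟩ := WfDvdMonoid.max_power_factor' hg hnu
  refine ⟨n, b, fun h0 => hb ?_, rfl⟩
  have : ∀ i, ∃ c, PowerSeries.coeff i b = t * c := by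
    intro i
    have := congrArg (PowerSeries.coeff i) h0
    rw [PowerSeries.coeff_map, map_zero, IsLocalRing.residue_eq_zero_iff, ht.maximalIdeal_eq,
      Ideal.mem_span_singleton] at this
    exact this
  choose c hc using this
  refine ⟨PowerSeries.mk c, ?_⟩
  ext i
  rw [PowerSeries.coeff_C_mul, PowerSeries.coeff_mk, hc]

theorem PC_ne {T : Type} [CommRing T] {t : T} (ht : t ≠ 0) : (PowerSeries.C t : PowerSeries T) ≠ 0 := by
  intro h
  have := congrArg (PowerSeries.constantCoeff) h
  rw [PowerSeries.constantCoeff_C, map_zero] at this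
  exact ht this

section
variable {T : Type} [CommRing T] [IsDomain T]

local notation "FF" => FractionRing (PowerSeries T)
local notation "AA" => algebraMap (PowerSeries T) (FractionRing (PowerSeries T))

theorem core_char_p {p : ℕ} [hp : Fact p.Prime] [IsDiscreteValuationRing T] [CharP T p]
    {F0 : Type} [Field F0] [Algebra T[X] F0] [IsFractionRing T[X] F0]
    [Algebra F0 FF] [IsScalarTower T[X] F0 FF]
    [CharP F0 p] (t : T) (ht : Irreducible t) (b h : FractionRing (PowerSeries T))
    (hb : IsSeparable F0 b) :
    algebraMap (PowerSeries T) (FractionRing (PowerSeries T)) (lac p T) /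
      algebraMap (PowerSeries T) (FractionRing (PowerSeries T)) (PowerSeries.C t) ≠ b + h - h ^ p := by
  intro heq
  have : CharP FF p := charP_of_injective_ringHom (f := (algebraMap F0 FF)) (algebraMap F0 FF).injective p
  have : ExpChar FF p := ExpChar.prime hp.out
  set a := lac p T with ha
  have hCt : (PowerSeries.C t : PowerSeries T) ≠ 0 := PC_ne ht.ne_zero
  have hAt := AA_ne hCt
  have hba : IsAlgebraic T[X] b := (IsFractionRing.isAlgebraic_iff T[X] F0 FF).mpr hb.isIntegral.isAlgebraic
  have hat : ∀ m, prjF (p^(m+1)) (AA a / AA (PowerSeries.C t)) = 0 := by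
    intro m
    have e : AA a / AA (PowerSeries.C t) =
        AA (PowerSeries.C (t ^ (p^(m+1) - 1)) * a) / AA (PowerSeries.C t) ^ p^(m+1) := by
      have hq : 0 < p^(m+1) := pow_pos hp.out.pos _
      obtain ⟨q, hq⟩ := Nat.exists_eq_succ_of_ne_zero hq.ne'
      rw [hq]
      simp only [map_mul, map_pow, Nat.succ_eq_add_one, Nat.add_sub_cancel]
      rw [div_eq_div_iff hAt (pow_ne_zero _ hAt)]
      ring
    rw [e, prjF_eq _ _ _ hCt, prj_smul, prj_lac]
    simp
  have key : ∀ m, ∃ β : FF, IsAlgebraic T[X] β ∧ h ^ p^m = β + prjF (p^m) h := by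
    intro m
    induction m with
    | zero =>
      refine ⟨0, isAlgebraic_zero, ?_⟩
      obtain ⟨f, g, hg, e⟩ := rep (p^0) (by simp) h
      rw [e, prjF_eq _ _ _ hg]
      simp [prj_one]
    | succ m ih =>
      obtain ⟨β, hβ, e⟩ := ih
      refine ⟨β ^ p + prjF (p^(m+1)) b, (hβ.pow _).add (prjF_sep _ _ hb), ?_⟩
      rw [pow_succ, pow_mul, e, add_pow_expChar, ← prjF_frob, ← pow_succ]
      have e2 : h ^ p + AA a / AA (PowerSeries.C t) = b + h := by rw [heq]; ring
      have e3 := congrArg (prjF (p^(m+1))) e2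
      rw [prjF_add, prjF_add, hat, add_zero] at e3
      rw [e3]; ring
  -- pole order of h
  obtain ⟨f, g, hg, hfg⟩ := IsFractionRing.div_surjective (A := PowerSeries T) h
  have hg := nonZeroDivisors.ne_zero hg
  obtain ⟨n, g0, hg0, hgn⟩ := factor_C ht g hg
  obtain ⟨m, hm⟩ : ∃ m, n * p + 1 ≤ p ^ m := ⟨n * p + 1, (Nat.lt_pow_self hp.out.one_lt).le⟩
  obtain ⟨β, hβ, e⟩ := key m
  have hp1 := hp.out.one_lt
  have hnq : n ≤ p^m := by nlinarith
  have hg00 : g0 ≠ 0 := by rintro rfl; exact hg0 (map_zero _)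
  have hAg := AA_ne hg00
  obtain ⟨s, hs⟩ : ∃ s, prjF (p^m) h * (AA (PowerSeries.C t) ^ n * AA g0 ^ p^m) = AA s := by
    refine ⟨prj (p^m) (f * g0 ^ (p^m - 1)), ?_⟩
    have e1 : h = AA (PowerSeries.C (t ^ (p^m - n)) * (f * g0 ^ (p^m - 1))) /
        AA (PowerSeries.C t * g0) ^ p^m := by
      rw [← hfg, hgn]
      have hq : 0 < p^m := pow_pos hp.out.pos _
      have e4 : AA g0 ^ p^m = AA g0 * AA g0 ^ (p^m - 1) := by
        rw [← pow_succ', Nat.sub_add_cancel hq]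
      have e5 : AA (PowerSeries.C t) ^ p^m = AA (PowerSeries.C t) ^ n * AA (PowerSeries.C t) ^ (p^m - n) := by
        rw [← pow_add, Nat.add_sub_cancel' hnq]
      simp only [map_mul, map_pow, mul_pow]
      rw [e4, e5]
      field_simp
    rw [e1, prjF_eq _ _ _ (mul_ne_zero hCt hg00), prj_smul]
    have e5 : AA (PowerSeries.C t) ^ p^m = AA (PowerSeries.C t) ^ n * AA (PowerSeries.C t) ^ (p^m - n) := by
      rw [← pow_add, Nat.add_sub_cancel' hnq]
    simp only [map_mul, map_pow, mul_pow]
    rw [e5]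
    field_simp
  -- the algebraic element
  have hCalg : IsAlgebraic T[X] (AA (PowerSeries.C t)) := by
    have := isAlgebraic_algebraMap (R := T[X]) (A := FF) (Polynomial.C t)
    rw [IsScalarTower.algebraMap_apply T[X] (PowerSeries T) FF] at this
    convert this
    exact (Polynomial.coe_C t).symm
  have hu : IsAlgebraic T[X] (AA (PowerSeries.C t) ^ p^m * (b ^ p^m + β - β ^ p)) :=
    (hCalg.pow _).mul (((hba.pow _).add hβ).sub (hβ.pow _))
  have e6 : AA a ^ p^m = AA (PowerSeries.C t) ^ p^m * (b ^ p^m + (h ^ p^m) - (h^p^m) ^ p) := by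
    rw [← pow_mul, mul_comm (p^m) p, pow_mul, ← add_pow_expChar_pow, ← sub_pow_expChar_pow, ← heq, ← mul_pow]
    congr 1
    field_simp
  obtain ⟨l, hl⟩ := Nat.exists_eq_add_of_le hm
  have e7 : AA (PowerSeries.C t) ^ p^m * (b ^ p^m + β - β ^ p) * AA (g0 ^ (p^m * p)) =
      AA (a ^ p^m * g0 ^ (p^m * p) - PowerSeries.C t ^ (1 + l) *
        (PowerSeries.C t ^ (n * (p-1)) * s * g0 ^ (p^m * (p-1)) - s ^ p)) := by
    have e8 : AA (PowerSeries.C t) ^ p^m = AA (PowerSeries.C t) ^ (1 + l) * (AA (PowerSeries.C t) ^ (n*(p-1)) * AA (PowerSeries.C t) ^ n) := by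
      rw [← pow_add, ← pow_add, hl]
      congr 1
      obtain ⟨r, rfl⟩ := Nat.exists_eq_add_of_lt hp1
      simp only [Nat.add_sub_cancel]; ring
    have e9 : AA (PowerSeries.C t) ^ p^m = AA (PowerSeries.C t) ^ (1 + l) * (AA (PowerSeries.C t) ^ n) ^ p := by
      rw [← pow_mul, ← pow_add, hl]
      congr 1
      ring
    have e10 : AA g0 ^ (p^m * p) = AA g0 ^ (p^m * (p-1)) * AA g0 ^ p^m := by
      rw [← pow_add]
      congr 1
      obtain ⟨r, rfl⟩ := Nat.exists_eq_add_of_lt hp1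
      simp only [Nat.add_sub_cancel]; ring
    have hb1 : b ^ p^m + β - β ^ p = (b ^ p^m + (h ^ p^m) - (h^p^m) ^ p) - (prjF (p^m) h) + (prjF (p^m) h) ^ p := by
      rw [e, add_pow_expChar]; ring
    simp only [map_sub, map_mul, map_pow]
    rw [hb1, e6, ← hs]
    have e11 : (AA (PowerSeries.C t) ^ (1 + l) * (AA (PowerSeries.C t) ^ (n*(p-1)) * AA (PowerSeries.C t) ^ n)) * prjF (p^m) h * (AA g0 ^ (p^m * (p-1)) * AA g0 ^ p^m)
       = AA (PowerSeries.C t) ^ p^m * prjF (p^m) h * AA g0 ^ (p^m * p) := by rw [← e8, ← e10]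
    have : AA (PowerSeries.C t) ^ p^m * prjF (p^m) h ^ p * AA g0 ^ (p^m * p)
       = AA (PowerSeries.C t) ^ (1 + l) * (AA (PowerSeries.C t) ^ n) ^ p * prjF (p^m) h ^ p * AA g0 ^ (p^m * p) := by rw [← e9]
    rw [mul_pow, mul_pow, ← pow_mul (AA g0)]
    linear_combination this + e11
  have hmg : PowerSeries.map (IsLocalRing.residue T) (g0 ^ (p^m * p)) ≠ 0 := by
    rw [map_pow]; exact pow_ne_zero _ hg0
  have fin := reduction_algebraic _ hu _ _ hmg e7
  have hrt : PowerSeries.map (IsLocalRing.residue T) (PowerSeries.C t) = 0 := by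
    rw [PowerSeries.map_C, (IsLocalRing.residue_eq_zero_iff t).mpr ((IsLocalRing.mem_maximalIdeal _).mpr ht.not_isUnit), map_zero]
  rw [map_sub, map_mul, map_mul _ (_ ^ (1 + l)), map_pow _ (PowerSeries.C t), hrt, pow_add, pow_one, zero_mul, zero_mul, sub_zero,
    map_mul, mul_div_cancel_right₀, map_pow, map_pow, ha, map_lac] at fin
  · exact lac_not_alg p hp.out.pos _ (IsAlgebraic.of_pow (pow_pos hp.out.pos m) fin)
  · rw [Ne, map_eq_zero_iff _ (IsFractionRing.injective _ _)]; exact hmg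

end

end PGC

namespace PGC

open Polynomial

open scoped TensorProduct in
theorem tmul_li {K V W : Type} [Field K] [AddCommGroup V] [Module K V] [AddCommGroup W] [Module K W]
    {ι : Type} [Fintype ι] (v : ι → V) (hv : LinearIndependent K v) (c : ι → W)
    (h : ∑ i, v i ⊗ₜ[K] c i = 0) (i0 : ι) : c i0 = 0 := by
  classical
  obtain ⟨g, hg⟩ := LinearMap.exists_extend ((Finsupp.lapply i0).comp hv.repr)
  have hgv : ∀ i, g (v i) = if i = i0 then 1 else 0 := by
    intro i
    have := LinearMap.congr_fun hg ⟨v i, Submodule.subset_span ⟨i, rfl⟩⟩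
    simp only [LinearMap.comp_apply, Submodule.subtype_apply] at this
    rw [this, hv.repr_eq_single i _ rfl]
    simp [Finsupp.single_apply]
  have := congrArg (TensorProduct.lid K W ∘ LinearMap.rTensor W g) h
  simpa [hgv] using this

section
open scoped TensorProduct

attribute [local instance] Algebra.TensorProduct.rightAlgebra

theorem descent {F0 F E EP : Type} [Field F0] [Field F] [Field E] [Field EP]
    [Algebra F0 F] [Algebra F0 E] [Algebra F EP] [Algebra F0 EP] [IsScalarTower F0 F EP]
    [Algebra.IsSeparable F EP] (p : ℕ) (hp : 1 < p) (hE : Module.finrank F0 E = p)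
    (hEP : Module.finrank F EP = p)
    (H : ∀ e : EP, IsSeparable F0 e → e ∈ (algebraMap F EP).range)
    (φ : (E ⊗[F0] F) ≃ₐ[F] EP) : False := by
  have : FiniteDimensional F0 E := Module.finite_of_finrank_pos (by omega)
  have : FiniteDimensional F EP := Module.finite_of_finrank_pos (by omega)
  have h1 : ∀ (e : E) (c : F), φ (e ⊗ₜ c) = c • φ (e ⊗ₜ 1) := by
    intro e c
    rw [← map_smul]
    congr 1
    rw [Algebra.smul_def, Algebra.TensorProduct.right_algebraMap_apply,
      Algebra.TensorProduct.tmul_mul_tmul, one_mul, mul_one]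
  let i : E →ₐ[F0] EP :=
    { toRingHom := (φ : (E ⊗[F0] F) →+* EP).comp
        (Algebra.TensorProduct.includeLeft : E →ₐ[F0] (E ⊗[F0] F)).toRingHom
      commutes' := by
        intro c
        change φ ((algebraMap F0 E c) ⊗ₜ 1) = _
        rw [IsScalarTower.algebraMap_apply F0 F EP, ← φ.commutes,
          Algebra.TensorProduct.right_algebraMap_apply, Algebra.algebraMap_eq_smul_one,
          TensorProduct.smul_tmul, ← Algebra.algebraMap_eq_smul_one] }
  have hi : ∀ e, i e = φ (e ⊗ₜ 1) := fun e => rfl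
  have hsep : ∀ e : E, IsSeparable F0 (i e) := by
    intro e
    have hint : IsIntegral F0 e := IsIntegral.of_finite F0 e
    have hintF : IsIntegral F (i e) := IsIntegral.of_finite F _
    have hdvd : minpoly F (i e) ∣ (minpoly F0 e).map (algebraMap F0 F) := by
      apply minpoly.dvd
      rw [aeval_map_algebraMap, aeval_algHom_apply, minpoly.aeval, map_zero]
    have hdeg : (minpoly F0 e).natDegree ≤ (minpoly F (i e)).natDegree := by
      by_contra hlt
      push Not at hlt
      have h2 := minpoly.aeval F (i e)
      rw [aeval_eq_sum_range' hlt, Finset.sum_range] at h2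
      have h3 : ∑ j : Fin (minpoly F0 e).natDegree, (e ^ (j:ℕ)) ⊗ₜ[F0] (minpoly F (i e)).coeff j = 0 := by
        apply φ.injective
        rw [map_zero, map_sum, ← h2]
        apply Finset.sum_congr rfl
        intro j _
        rw [h1, ← hi, map_pow]
      have h4 := tmul_li _ (linearIndependent_pow (K := F0) e) _ h3 ⟨_, hlt⟩
      have h5 := minpoly.monic hintF
      rw [Monic, leadingCoeff] at h5
      rw [h5] at h4
      exact one_ne_zero h4
    have heq : minpoly F (i e) = (minpoly F0 e).map (algebraMap F0 F) :=
      (eq_of_monic_of_dvd_of_natDegree_le (minpoly.monic hintF) ((minpoly.monic hint).map _) hdvd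
        (by rwa [natDegree_map])).symm
    have hs : IsSeparable F (i e) := Algebra.IsSeparable.isSeparable F (i e)
    rw [IsSeparable, heq, separable_map] at hs
    rw [IsSeparable, minpoly.algHom_eq i i.injective]
    exact hs
  have hr : ∀ z : E ⊗[F0] F, φ z ∈ (algebraMap F EP).range := by
    intro z
    induction z using TensorProduct.induction_on with
    | zero => rw [map_zero]; exact zero_mem _
    | add x y hx hy => rw [map_add]; exact add_mem hx hy
    | tmul e c =>
      rw [h1, Algebra.smul_def]
      exact mul_mem ⟨c, rfl⟩ (H _ (hsep e))
  have hb : (⊥ : Subalgebra F EP) = ⊤ := by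
    rw [eq_top_iff]
    intro x _
    obtain ⟨z, rfl⟩ := φ.surjective x
    obtain ⟨c, hc⟩ := hr z
    exact Algebra.mem_bot.mpr ⟨c, hc⟩
  have := (Subalgebra.bot_eq_top_iff_finrank_eq_one).mp hb
  omega

end

end PGC

namespace PGC

open Polynomial

theorem as_desc {p : ℕ} [hp : Fact p.Prime] {F0 F EP : Type} [Field F0] [Field F] [Field EP]
    [Algebra F0 F] [Algebra F EP] [Algebra F0 EP] [IsScalarTower F0 F EP] [CharP F p]
    (α : F) (y : EP) (hy : y ^ p - y = algebraMap F EP α) (σ : EP ≃ₐ[F] EP) (hσ : σ y = y + 1)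
    (hσp : ∀ x, (σ^p) x = x)
    (hfix : ∀ x, σ x = x → x ∈ (algebraMap F EP).range)
    (core : ∀ b h : F, IsSeparable F0 b → α ≠ b + h - h ^ p) (e : EP) (he : IsSeparable F0 e) :
    e ∈ (algebraMap F EP).range := by
  by_contra hne
  have : CharP EP p := charP_of_injective_ringHom (algebraMap F EP).injective p
  have : ExpChar EP p := ExpChar.prime hp.out
  have : ExpChar F p := ExpChar.prime hp.out
  let S : Module.End F EP := σ.toLinearMap
  have : CharP (Module.End F EP) p := by
    have : Nontrivial (Module.End F EP) := inferInstance
    exact charP_of_injective_algebraMap (algebraMap F (Module.End F EP)).injective p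
  have hSp : ∀ n x, (S ^ n) x = (σ ^ n) x := by
    intro n
    induction n with
    | zero => intro x; rfl
    | succ n ih => intro x; rw [pow_succ, pow_succ, Module.End.mul_apply, ih]; rfl
  let D : Module.End F EP := S - 1
  have hDp : D ^ p = 0 := by
    have : D ^ p = S ^ p - 1 ^ p := sub_pow_char_of_commute p (Commute.one_right S)
    rw [this]
    ext x
    simp [hSp, hσp]
  have hD : ∀ x, D x = σ x - x := fun x => rfl
  have hσsep : ∀ x, x ∈ separableClosure F0 EP → σ x ∈ separableClosure F0 EP := by
    intro x hx
    rw [mem_separableClosure_iff] at hx ⊢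
    have := minpoly.algEquiv_eq (σ.restrictScalars F0) x
    rw [IsSeparable]
    change (minpoly F0 ((σ.restrictScalars F0) x)).Separable
    rw [this]; exact hx
  have hDsep : ∀ n, (D ^ n) e ∈ separableClosure F0 EP := by
    intro n
    induction n with
    | zero => exact mem_separableClosure_iff.mpr he
    | succ n ih =>
      rw [pow_succ', Module.End.mul_apply, hD]
      exact sub_mem (hσsep _ ih) ih
  classical
  have hex : ∃ n, (D ^ n) e = 0 := ⟨p, by rw [hDp]; rfl⟩
  obtain ⟨N, hN, hmin⟩ : ∃ N, (D ^ N) e = 0 ∧ ∀ m < N, (D^m) e ≠ 0 :=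
    ⟨Nat.find hex, Nat.find_spec hex, fun m hm => Nat.find_min hex hm⟩
  have h2 : 2 ≤ N := by
    by_contra hlt
    push Not at hlt
    apply hne
    apply hfix
    interval_cases N
    · have : e = 0 := hN
      rw [this, map_zero]
    · rw [pow_one, hD, sub_eq_zero] at hN
      exact hN
  obtain ⟨M, rfl⟩ := Nat.exists_eq_add_of_le' h2
  set w := (D ^ M) e with hw
  set c := (D ^ (M+1)) e with hc
  have hc1 : c = σ w - w := by rw [hc, pow_succ', Module.End.mul_apply, hD]
  have hc0 : c ≠ 0 := hmin _ (by omega)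
  have hcσ : σ c = c := by
    have : (D ^ (M+1+1)) e = 0 := hN
    rw [pow_succ', Module.End.mul_apply, hD, sub_eq_zero] at this
    exact this
  set m := w / c with hm
  have hmσ : σ m = m + 1 := by
    rw [hm, map_div₀, hcσ]
    field_simp
    rw [hc1]; ring
  have hms : m ∈ separableClosure F0 EP := div_mem (hDsep _) (hDsep _)
  obtain ⟨h0, hh0⟩ := hfix (y - m) (by rw [map_sub, hσ, hmσ]; ring)
  obtain ⟨b0, hb0⟩ := hfix (m ^ p - m) (by
    rw [map_sub, map_pow, hmσ, add_pow_expChar]; ring)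
  have hb0s : IsSeparable F0 b0 := by
    have : IsSeparable F0 (algebraMap F EP b0) := by
      rw [hb0, ← mem_separableClosure_iff]
      exact sub_mem (pow_mem hms _) hms
    rw [IsSeparable, minpoly.algebraMap_eq (algebraMap F EP).injective] at this
    exact this
  apply core b0 (-h0) hb0s
  apply (algebraMap F EP).injective
  have hneg : (-h0) ^ p = - h0 ^ p := by
    have := sub_pow_expChar (p := p) (0:F) h0
    rw [zero_sub, zero_pow hp.out.ne_zero, zero_sub] at this
    exact this
  rw [hneg, map_sub, map_add, map_neg, map_neg, map_pow, hh0, hb0, sub_pow_expChar, ← hy]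
  ring

theorem as_exists {p : ℕ} [hp : Fact p.Prime] {F0 F : Type} [Field F0] [Field F]
    [Algebra F0 F] [CharP F p] (α : F)
    (core : ∀ b h : F, IsSeparable F0 b → α ≠ b + h - h ^ p) :
    ∃ (EP : Type) (_ : Field EP) (_ : Algebra F EP) (_ : Algebra F0 EP) (_ : IsScalarTower F0 F EP),
      IsGalois F EP ∧ Module.finrank F EP = p ∧
      ∀ e : EP, IsSeparable F0 e → e ∈ (algebraMap F EP).range := by
  let N := AlgebraicClosure F
  have : CharP N p := charP_of_injective_ringHom (algebraMap F N).injective p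
  have : ExpChar N p := ExpChar.prime hp.out
  have : ExpChar F p := ExpChar.prime hp.out
  let f : F[X] := X ^ p - X - C α
  have hfd : f.natDegree = p := by
    have h1 : (X + C α : F[X]).natDegree < p := by
      rw [natDegree_X_add_C]; exact hp.out.one_lt
    have : f = X ^ p - (X + C α) := by simp only [f]; ring
    rw [this, natDegree_sub_eq_left_of_natDegree_lt (by rwa [natDegree_X_pow]), natDegree_X_pow]
  have hf0 : f ≠ 0 := by
    intro h; rw [h, natDegree_zero] at hfd; exact hp.out.ne_zero hfd.symm
  have hfs : f.Separable := by
    rw [Polynomial.separable_def]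
    have : derivative f = -1 := by
      simp [f, derivative_X_pow]
    rw [this]
    exact ⟨0, -1, by simp⟩
  obtain ⟨y, hy⟩ : ∃ y : N, aeval y f = 0 := IsAlgClosed.exists_aeval_eq_zero N f (by
    rw [degree_eq_natDegree hf0, hfd]; exact_mod_cast hp.out.ne_zero)
  have hy' : y ^ p - y = algebraMap F N α := by
    simp [f] at hy
    linear_combination hy
  let EP := IntermediateField.adjoin F {y}
  let Y : EP := ⟨y, IntermediateField.mem_adjoin_simple_self F y⟩
  have hint : IsIntegral F y := Algebra.IsIntegral.isIntegral y
  have : FiniteDimensional F EP := IntermediateField.adjoin.finiteDimensional hint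
  have hYp : Y ^ p - Y = algebraMap F EP α := by
    apply Subtype.ext; exact hy'
  have : CharP EP p := charP_of_injective_ringHom (algebraMap F EP).injective p
  have : ExpChar EP p := ExpChar.prime hp.out
  have hroots : ∀ i : ℕ, aeval (Y + i) f = 0 := by
    intro i
    have hi : (i : EP) ^ p = i := by
      have := map_natCast (frobenius EP p) i
      exact this
    simp only [f, map_sub, map_pow, aeval_X, aeval_C, add_pow_expChar, hi, ← hYp]
    ring
  have hrinj : ∀ i ∈ Finset.range p, ∀ j ∈ Finset.range p, Y + (i:EP) = Y + (j:EP) → i = j := by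
    intro i hi j hj h
    have h := add_left_cancel h
    rw [CharP.natCast_eq_natCast EP p] at h
    exact Nat.ModEq.eq_of_lt_of_lt h (Finset.mem_range.mp hi) (Finset.mem_range.mp hj)
  have hf0' : f.map (algebraMap F EP) ≠ 0 := map_ne_zero hf0
  have hsplit : (f.map (algebraMap F EP)).Splits := by
    rw [Polynomial.splits_iff_card_roots, natDegree_map, hfd]
    apply le_antisymm
    · have := card_roots' (f.map (algebraMap F EP))
      rwa [natDegree_map, hfd] at this
    · classical
      have hsub : (Finset.range p).image (fun i : ℕ => Y + (i:EP)) ⊆ (f.map (algebraMap F EP)).roots.toFinset := by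
        intro z hz
        obtain ⟨i, _, rfl⟩ := Finset.mem_image.mp hz
        rw [Multiset.mem_toFinset, mem_roots hf0', IsRoot, eval_map_algebraMap]
        exact hroots i
      have := (Finset.card_le_card hsub).trans (Multiset.toFinset_card_le _)
      rwa [Finset.card_image_of_injOn (fun i hi j hj => hrinj i hi j hj), Finset.card_range] at this
  have hY1 : Algebra.adjoin F {Y} = ⊤ := by
    have := IntermediateField.adjoin_simple_toSubalgebra_of_isAlgebraic (F := F) (α := y) hint.isAlgebraic
    rw [eq_top_iff]
    intro z _
    have hz : (z : N) ∈ Algebra.adjoin F {y} := by rw [← this]; exact z.2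
    rw [Algebra.adjoin_singleton_eq_range_aeval] at hz ⊢
    obtain ⟨P, hP⟩ := hz
    refine ⟨P, Subtype.ext ?_⟩
    have := aeval_algHom_apply EP.val Y P
    have hP : aeval y P = z := hP
    change aeval y P = _ at this
    rw [hP] at this
    exact this.symm
  have hadj : Algebra.adjoin F (f.rootSet EP) = ⊤ := by
    rw [eq_top_iff, ← hY1]
    apply Algebra.adjoin_mono
    rintro _ rfl
    rw [mem_rootSet]
    refine ⟨hf0, ?_⟩
    have := hroots 0
    simpa using this
  have : IsSplittingField F EP f := ⟨hsplit, hadj⟩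
  have hgal : IsGalois F EP := IsGalois.of_separable_splitting_field hfs
  have hynot : Y ∉ (⊥ : IntermediateField F EP) := by
    rintro ⟨z, hz⟩
    apply core 0 (-z) (by simpa using isSeparable_algebraMap (F := F0) (K := F) (0 : F0))
    have hneg : (-z) ^ p = - z ^ p := by
      have := sub_pow_expChar (p := p) (0:F) z
      rw [zero_sub, zero_pow hp.out.ne_zero, zero_sub] at this
      exact this
    apply (algebraMap F EP).injective
    have hz : algebraMap F EP z = Y := hz
    rw [hneg]
    simp only [map_sub, map_add, map_neg, map_pow, map_zero, hz, ← hYp]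
    ring
  obtain ⟨τ, hτ⟩ : ∃ τ : EP ≃ₐ[F] EP, τ Y ≠ Y := by
    by_contra hcon
    push Not at hcon
    exact hynot ((IsGalois.mem_bot_iff_fixed Y).mpr hcon)
  obtain ⟨i, hi⟩ : ∃ i : ℕ, (i : EP) = τ Y - Y := by
    have h1 : (τ Y) ^ p - τ Y = algebraMap F EP α := by
      rw [← map_pow, ← map_sub, hYp, τ.commutes]
    have h2 : (τ Y - Y) ^ p = (τ Y - Y) := by
      rw [sub_pow_expChar]; linear_combination h1 - hYp
    have h3 := (Subfield.mem_bot_iff_pow_eq_self EP p).mpr h2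
    rw [← ZMod.fieldRange_castHom_eq_bot p] at h3
    obtain ⟨z, hz⟩ := h3
    refine ⟨z.val, ?_⟩
    rw [← hz, ← map_natCast (ZMod.castHom (dvd_refl p) EP), ZMod.natCast_zmod_val]
  have hip : Nat.Coprime i p := by
    rw [Nat.coprime_comm, hp.out.coprime_iff_not_dvd]
    intro hdvd
    rw [← CharP.cast_eq_zero_iff EP p, hi, sub_eq_zero] at hdvd
    exact hτ hdvd
  obtain ⟨n, -, hn⟩ := Nat.exists_mul_mod_eq_one_of_coprime hip hp.out.one_lt
  have hpow : ∀ (ρ : EP ≃ₐ[F] EP) (r : ℕ) (k : ℕ), ρ Y = Y + r → (ρ ^ k) Y = Y + (k * r : ℕ) := by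
    intro ρ r k hρ
    induction k with
    | zero => simp
    | succ k ih =>
      rw [pow_succ', AlgEquiv.mul_apply, ih, map_add, hρ, map_natCast]
      push_cast; ring
  have hσ : (τ ^ n) Y = Y + 1 := by
    rw [hpow τ i n (by rw [hi]; ring)]
    congr 1
    have : ((n * i : ℕ) : EP) = ((1 : ℕ) : EP) := by
      rw [CharP.natCast_eq_natCast EP p, Nat.ModEq, mul_comm, hn, Nat.mod_eq_of_lt hp.out.one_lt]
    rw [this, Nat.cast_one]
  set σ := τ ^ n with hσd
  have hext : ∀ ρ : EP ≃ₐ[F] EP, ρ Y = Y → ρ = 1 := by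
    intro ρ hρ
    have : (ρ : EP →ₐ[F] EP) = AlgHom.id F EP := by
      apply AlgHom.ext_of_adjoin_eq_top hY1
      rintro _ rfl
      exact hρ
    ext x
    exact congrArg Subtype.val (AlgHom.congr_fun this x)
  have hσp : σ ^ p = 1 := by
    apply hext
    rw [hpow σ 1 p (by rw [hσ, Nat.cast_one])]
    simp
  have hσ1 : σ ≠ 1 := by
    intro h
    rw [h] at hσ
    simp at hσ
  have hord : orderOf σ = p := orderOf_eq_prime hσp hσ1
  have hcard : Nat.card (EP ≃ₐ[F] EP) = Module.finrank F EP := IsGalois.card_aut_eq_finrank F EP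
  have hle : Module.finrank F EP ≤ p := by
    rw [IntermediateField.adjoin.finrank hint, ← hfd]
    exact natDegree_le_of_dvd (minpoly.dvd F y hy) hf0
  have hrank : Module.finrank F EP = p := by
    apply le_antisymm hle
    rw [← hcard, ← hord]
    exact Nat.le_of_dvd Nat.card_pos (orderOf_dvd_natCard σ)
  refine ⟨EP, inferInstance, inferInstance, inferInstance, inferInstance, hgal, hrank, ?_⟩
  intro e he
  refine as_desc α Y hYp σ hσ (fun x => by rw [hσp]; rfl) ?_ core e he
  intro x hx
  have : x ∈ (⊥ : IntermediateField F EP) := by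
    rw [IsGalois.mem_bot_iff_fixed]
    intro ρ
    obtain ⟨k, rfl⟩ := mem_powers_of_prime_card (hcard.trans hrank) hσ1 (g' := ρ)
    have : ∀ k : ℕ, (σ ^ k) x = x := by
      intro k
      induction k with
      | zero => rfl
      | succ k ih => rw [pow_succ', AlgEquiv.mul_apply, ih, hx]
    exact this k
  exact this

end PGC

namespace PGC

open Polynomial

theorem exists_der {A F : Type} [CommRing A] [IsDomain A] [Field F] [Algebra A F] [IsFractionRing A F]
    (d : A → A) (dadd : ∀ a b, d (a + b) = d a + d b) (dmul : ∀ a b, d (a * b) = a * d b + b * d a) :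
    ∃ D : F → F, (∀ u v, D (u + v) = D u + D v) ∧ (∀ u v, D (u * v) = u * D v + v * D u) ∧
      ∀ a, D (algebraMap A F a) = algebraMap A F (d a) := by
  have d0 : d 0 = 0 := by simpa using dadd 0 0
  have d1 : d 1 = 0 := by simpa using dmul 1 1
  let Φ : A →+* TrivSqZeroExt F F :=
    { toFun := fun a => (algebraMap A F a, algebraMap A F (d a))
      map_one' := by ext <;> simp [d1, TrivSqZeroExt.fst, TrivSqZeroExt.snd] <;> rfl
      map_zero' := by ext <;> simp [d0, TrivSqZeroExt.fst, TrivSqZeroExt.snd] <;> rfl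
      map_add' := by
        intro a b
        ext
        · exact map_add _ _ _
        · change algebraMap A F (d (a + b)) = algebraMap A F (d a) + algebraMap A F (d b)
          rw [dadd, map_add]
      map_mul' := by
        intro a b
        ext
        · exact map_mul _ _ _
        · change algebraMap A F (d (a * b)) = algebraMap A F a * algebraMap A F (d b) + algebraMap A F (d a) * algebraMap A F b
          rw [dmul, map_add, map_mul, map_mul, mul_comm (algebraMap A F b)] }
  have hu : ∀ y : nonZeroDivisors A, IsUnit (Φ y) := by
    intro y
    rw [TrivSqZeroExt.isUnit_iff_isUnit_fst]
    change IsUnit (algebraMap A F y)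
    exact IsLocalization.map_units F y
  let Ψ : F →+* TrivSqZeroExt F F := IsLocalization.lift hu
  have hΨ : ∀ a, Ψ (algebraMap A F a) = Φ a := IsLocalization.lift_eq hu
  have hfst : ∀ u, (Ψ u).fst = u := by
    intro u
    have : ((TrivSqZeroExt.fstHom F F F).toRingHom.comp Ψ) = RingHom.id F := by
      apply IsLocalization.ringHom_ext (nonZeroDivisors A)
      ext a
      change (Ψ (algebraMap A F a)).fst = _
      rw [hΨ]; rfl
    exact RingHom.congr_fun this u
  refine ⟨fun u => (Ψ u).snd, fun u v => by simp, fun u v => ?_, fun a => ?_⟩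
  · simp only [map_mul, TrivSqZeroExt.snd_mul, hfst]
    simp [mul_comm]
  · simp only [hΨ]; rfl

theorem der_alg {B F : Type} [CommRing B] [IsDomain B] [Field F] [CharZero F] [Algebra B F]
    (hinj : Function.Injective (algebraMap B F)) (D : F → F) (hadd : ∀ u v, D (u + v) = D u + D v)
    (hmul : ∀ u v, D (u * v) = u * D v + v * D u)
    (hB : ∀ b : B, ∃ c : B, D (algebraMap B F b) = algebraMap B F c) (γ : F) (hγ : IsAlgebraic B γ) :
    IsAlgebraic B (D γ) := by
  have d0 : D 0 = 0 := by simpa using hadd 0 0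
  have d1 : D 1 = 0 := by simpa using hmul 1 1
  have hpow : ∀ n : ℕ, D (γ ^ n) = n * γ ^ (n-1) * D γ := by
    intro n
    induction n with
    | zero => simp [d1]
    | succ n ih =>
      rw [pow_succ, hmul, ih]
      rcases n with _ | n
      · simp
      · simp only [Nat.add_sub_cancel]; push_cast; ring
  have key : ∀ Q : B[X], ∃ R : B[X], D (aeval γ Q) = aeval γ R + aeval γ (derivative Q) * D γ := by
    intro Q
    induction Q using Polynomial.induction_on' with
    | add P Q hP hQ =>
      obtain ⟨R, hR⟩ := hP
      obtain ⟨S, hS⟩ := hQ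
      refine ⟨R + S, ?_⟩
      rw [map_add, hadd, hR, hS, derivative_add, map_add, map_add]; ring
    | monomial n a =>
      obtain ⟨c, hc⟩ := hB a
      refine ⟨monomial n c, ?_⟩
      rw [derivative_monomial]
      simp only [aeval_monomial]
      rw [hmul, hpow, hc, map_mul, map_natCast]; ring
  have hex : ∃ n, ∃ Q : B[X], Q ≠ 0 ∧ aeval γ Q = 0 ∧ Q.natDegree = n := by
    obtain ⟨Q, h1, h2⟩ := hγ
    exact ⟨_, Q, h1, h2, rfl⟩
  classical
  obtain ⟨Q, hQ0, hQ, hQd⟩ := Nat.find_spec hex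
  have hmin := fun m => Nat.find_min hex (m := m)
  rw [← hQd] at hmin
  have hd : Q.natDegree ≠ 0 := by
    intro h
    rw [eq_C_of_natDegree_eq_zero h, aeval_C, map_eq_zero_iff _ hinj] at hQ
    rw [eq_C_of_natDegree_eq_zero h, hQ, C_0] at hQ0
    exact hQ0 rfl
  have : CharZero B := ⟨fun m n h => by
    have := congrArg (algebraMap B F) h
    simpa using this⟩
  have hQ' : aeval γ (derivative Q) ≠ 0 := by
    intro h0
    have hlt := natDegree_derivative_lt hd
    refine hmin _ hlt ⟨_, ?_, h0, rfl⟩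
    intro h
    exact hd (derivative_eq_zero.mp h)
  obtain ⟨R, hR⟩ := key Q
  rw [hQ, d0] at hR
  have e : D γ = - aeval γ R / aeval γ (derivative Q) := by
    rw [eq_div_iff hQ']; linear_combination -hR
  have ha : ∀ P : B[X], IsAlgebraic B (aeval γ P) := by
    intro P
    induction P using Polynomial.induction_on' with
    | add P Q hP hQ => rw [map_add]; exact hP.add hQ
    | monomial n a => rw [aeval_monomial]; exact (isAlgebraic_algebraMap a).mul (hγ.pow n)
  rw [e, div_eq_mul_inv]
  exact (ha R).neg.mul (ha _).inv

section
variable {T : Type} [CommRing T] [IsDomain T]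

local notation "FF" => FractionRing (PowerSeries T)
local notation "AA" => algebraMap (PowerSeries T) (FractionRing (PowerSeries T))

theorem core_mixed [IsDiscreteValuationRing T] [CharZero T] (p : ℕ) (hp : 0 < p)
    (μ ν : T) (hpν : (p : T) = μ * ν) (hν : ¬ IsUnit ν) (z s : PowerSeries T)
    (hz : PowerSeries.derivative T z = PowerSeries.C μ * s)
    (hz0 : PowerSeries.map (IsLocalRing.residue T) z ≠ 0)
    (htr : ¬ IsAlgebraic (IsLocalRing.ResidueField T)[X]
      (algebraMap _ (FractionRing (PowerSeries (IsLocalRing.ResidueField T)))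
        (PowerSeries.map (IsLocalRing.residue T) s) /
       algebraMap _ (FractionRing (PowerSeries (IsLocalRing.ResidueField T)))
        (PowerSeries.map (IsLocalRing.residue T) z)))
    (γ h : FF) (hγ : IsAlgebraic T[X] γ) : AA z ≠ γ * h ^ p := by
  intro heq
  apply htr
  obtain ⟨π, hπ⟩ := IsDiscreteValuationRing.exists_irreducible T
  obtain ⟨D, Dadd, Dmul, DA⟩ := exists_der (A := PowerSeries T) (F := FF) (PowerSeries.derivative T)
    (fun a b => map_add _ a b) (fun a b => by rw [Derivation.leibniz]; rfl)
  have hinj : Function.Injective (algebraMap T[X] FF) := by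
    rw [IsScalarTower.algebraMap_eq T[X] (PowerSeries T) FF]
    rw [RingHom.coe_comp]
    exact (IsFractionRing.injective (PowerSeries T) FF).comp (Polynomial.coe_injective T)
  have hTF : Function.Injective (algebraMap T FF) := by
    have : ((algebraMap T[X] FF).comp Polynomial.C) = algebraMap T FF := by
      ext c
      rw [IsScalarTower.algebraMap_apply T T[X] FF]
      rfl
    rw [← this]
    exact hinj.comp Polynomial.C_injective
  have : CharZero FF := charZero_of_injective_algebraMap hTF
  have hDγ : IsAlgebraic T[X] (D γ) := by
    refine der_alg hinj D Dadd Dmul (fun b => ⟨Polynomial.derivative b, ?_⟩) γ hγ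
    rw [IsScalarTower.algebraMap_apply T[X] (PowerSeries T) FF, DA,
      IsScalarTower.algebraMap_apply T[X] (PowerSeries T) FF]
    congr 1
    exact PowerSeries.derivative_coe b
  have hzne : z ≠ 0 := by rintro rfl; exact hz0 (map_zero _)
  have hAz : AA z ≠ 0 := by rwa [Ne, map_eq_zero_iff _ (IsFractionRing.injective _ _)]
  have hh : h ≠ 0 := by
    rintro rfl
    rw [zero_pow hp.ne', mul_zero] at heq
    exact hAz heq
  have hγ0 : γ ≠ 0 := by
    rintro rfl
    rw [zero_mul] at heq
    exact hAz heq
  have d1 : D 1 = 0 := by simpa using Dmul 1 1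
  have hpow : ∀ n : ℕ, D (h ^ n) * h = n * h ^ n * D h := by
    intro n
    induction n with
    | zero => simp [d1]
    | succ n ih =>
      rw [pow_succ, Dmul, add_mul, mul_assoc h, ih]
      push_cast; ring
  -- factorization of h
  obtain ⟨f, g, hg, hfg⟩ := IsFractionRing.div_surjective (A := PowerSeries T) h
  have hg := nonZeroDivisors.ne_zero hg
  have hf : f ≠ 0 := by
    rintro rfl
    rw [map_zero, zero_div] at hfg
    exact hh hfg.symm
  obtain ⟨n, f0, hf0, hfn⟩ := factor_C hπ f hf
  obtain ⟨m, g0, hg0, hgm⟩ := factor_C hπ g hg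
  have hAne : ∀ a : PowerSeries T, PowerSeries.map (IsLocalRing.residue T) a ≠ 0 → AA a ≠ 0 := by
    intro a ha h0
    rw [map_eq_zero_iff _ (IsFractionRing.injective _ _)] at h0
    rw [h0] at ha
    exact ha (map_zero _)
  have hAf := hAne _ hf0
  have hAg := hAne _ hg0
  have hC : AA (PowerSeries.C π) ≠ 0 := by
    rw [Ne, map_eq_zero_iff _ (IsFractionRing.injective _ _)]
    exact PC_ne hπ.ne_zero
  have DC : ∀ (c : T) (u : FF), D (AA (PowerSeries.C c) * u) = AA (PowerSeries.C c) * D u := by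
    intro c u
    rw [Dmul, DA, PowerSeries.derivative_C, map_zero, mul_zero, add_zero]
  have e1 : h * (AA (PowerSeries.C (π ^ m)) * AA g0) = AA (PowerSeries.C (π ^ n)) * AA f0 := by
    rw [← hfg, hfn, hgm]
    simp only [map_mul, map_pow]
    field_simp
  have e2 := congrArg D e1
  rw [Dmul, DC, DC, DA, DA] at e2
  -- (Dh/h) f0 g0 = f0' g0 - g0' f0
  have e3 : D h * (AA f0 * AA g0) =
      h * (AA (PowerSeries.derivative T f0) * AA g0 - AA (PowerSeries.derivative T g0) * AA f0) := by
    have hCm : AA (PowerSeries.C (π ^ m)) ≠ 0 := by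
      rw [map_pow, map_pow]; exact pow_ne_zero _ hC
    have hCn : AA (PowerSeries.C (π ^ n)) ≠ 0 := by
      rw [map_pow, map_pow]; exact pow_ne_zero _ hC
    apply mul_left_cancel₀ hCm
    linear_combination AA f0 * e2 - AA (PowerSeries.derivative T f0) * e1
  have e4 := congrArg D heq
  rw [DA, hz, Dmul] at e4
  have hμ : μ ≠ 0 := by
    rintro rfl
    rw [zero_mul, Nat.cast_eq_zero] at hpν
    omega
  have hCμ : AA (PowerSeries.C μ) ≠ 0 := by
    rw [Ne, map_eq_zero_iff _ (IsFractionRing.injective _ _)]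
    exact PC_ne hμ
  have hpF : (p : FF) = AA (PowerSeries.C μ) * AA (PowerSeries.C ν) := by
    rw [← map_mul, ← map_mul, ← hpν, map_natCast, map_natCast]
  have hCalg : IsAlgebraic T[X] (AA (PowerSeries.C μ)) := by
    have := isAlgebraic_algebraMap (R := T[X]) (A := FF) (Polynomial.C μ)
    rw [IsScalarTower.algebraMap_apply T[X] (PowerSeries T) FF] at this
    convert this
    exact (Polynomial.coe_C μ).symm
  have hu : IsAlgebraic T[X] (D γ * (γ * AA (PowerSeries.C μ))⁻¹) :=
    hDγ.mul (hγ.mul hCalg).inv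
  have e5 : D γ * (γ * AA (PowerSeries.C μ))⁻¹ * AA (z * (f0 * g0)) =
      AA (s * (f0 * g0) - PowerSeries.C ν * (z * (PowerSeries.derivative T f0 * g0 - PowerSeries.derivative T g0 * f0))) := by
    simp only [map_sub, map_mul] at e4 ⊢
    have h1 := hpow p
    rw [hpF] at h1
    rw [← div_eq_mul_inv, div_mul_eq_mul_div, div_eq_iff (mul_ne_zero hγ0 hCμ)]
    apply mul_left_cancel₀ hh
    rw [heq]
    linear_combination (-γ * h * AA f0 * AA g0) * e4 + (-γ ^2 * AA f0 * AA g0) * h1 - (γ^2 * AA (PowerSeries.C μ) * AA (PowerSeries.C ν) * h ^ p) * e3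
  have hne : PowerSeries.map (IsLocalRing.residue T) (f0 * g0) ≠ 0 := by
    rw [map_mul]; exact mul_ne_zero hf0 hg0
  have fin := reduction_algebraic _ hu _ _ (by rw [map_mul]; exact mul_ne_zero hz0 hne) e5
  have hrt : PowerSeries.map (IsLocalRing.residue T) (PowerSeries.C ν) = 0 := by
    rw [PowerSeries.map_C, (IsLocalRing.residue_eq_zero_iff ν).mpr ((IsLocalRing.mem_maximalIdeal _).mpr hν), map_zero]
  rw [map_sub, map_mul _ s, map_mul _ (PowerSeries.C ν), hrt, zero_mul, sub_zero, map_mul _ z, map_mul (algebraMap _ _), map_mul (algebraMap _ _),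
    mul_div_mul_right] at fin
  · exact fin
  · rw [Ne, map_eq_zero_iff _ (IsFractionRing.injective _ _)]; exact hne

end

end PGC

namespace PGC

open Polynomial

theorem eig {p : ℕ} (hp : p.Prime) {F0 F' L : Type} [Field F0] [Field F'] [Field L] [CharZero L]
    [Algebra F0 F'] [Algebra F' L] [Algebra F0 L] [IsScalarTower F0 F' L]
    (ζ : F') (hζ : IsPrimitiveRoot ζ p) (z : F') (y : L)
    (hy : y ^ p = algebraMap F' L z) (σ : L ≃ₐ[F'] L) (hσ : σ y = algebraMap F' L ζ * y)
    (hσp : ∀ x, (σ^p) x = x)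
    (hfix : ∀ x, σ x = x → x ∈ (algebraMap F' L).range)
    (core : ∀ γ h : F', IsAlgebraic F0 γ → z ≠ γ * h ^ p) (e : L) (he : IsAlgebraic F0 e) :
    σ e = e := by
  have hinj : Function.Injective (algebraMap F' L) := (algebraMap F' L).injective
  set Z : L := algebraMap F' L ζ with hZ
  have hZp : IsPrimitiveRoot Z p := hζ.map_of_injective hinj
  have hZ0 : Z ≠ 0 := hZp.ne_zero hp.ne_zero
  have hσZ : σ Z = Z := σ.commutes ζ
  have hZalg : Z ∈ algebraicClosure F0 L := by
    rw [mem_algebraicClosure_iff]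
    refine ⟨X ^ p - 1, ?_, ?_⟩
    · exact X_pow_sub_C_ne_zero hp.pos (1 : F0)
    · simp [hZp.pow_eq_one]
  have hσalg : ∀ x, x ∈ algebraicClosure F0 L → σ x ∈ algebraicClosure F0 L := by
    intro x hx
    rw [mem_algebraicClosure_iff] at hx ⊢
    exact hx.algHom ((σ.restrictScalars F0) : L →ₐ[F0] L)
  have hσkalg : ∀ k : ℕ, (σ ^ k) e ∈ algebraicClosure F0 L := by
    intro k
    induction k with
    | zero => exact mem_algebraicClosure_iff.mpr he
    | succ k ih => rw [pow_succ', AlgEquiv.mul_apply]; exact hσalg _ ih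
  let c : ℕ → L := fun j => ∑ k ∈ Finset.range p, (Z⁻¹ ^ j) ^ k * (σ ^ k) e
  have hcalg : ∀ j, c j ∈ algebraicClosure F0 L := fun j =>
    sum_mem fun k _ => mul_mem (pow_mem (pow_mem (inv_mem hZalg) _) _) (hσkalg k)
  have hcσ : ∀ j, σ (c j) = Z ^ j * c j := by
    intro j
    let f : ℕ → L := fun k => (Z⁻¹ ^ j) ^ k * (σ ^ k) e
    have hf : f p = f 0 := by
      simp only [f, hσp, pow_zero]
      rw [pow_right_comm, inv_pow, hZp.pow_eq_one]
      simp
    have h1 : ∑ k ∈ Finset.range p, f (k+1) = ∑ k ∈ Finset.range p, f k := by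
      have a := Finset.sum_range_succ f p
      have b := Finset.sum_range_succ' f p
      rw [a, hf] at b
      exact (add_right_cancel b).symm
    have h2 : c j = ∑ k ∈ Finset.range p, f (k+1) := h1.symm
    rw [h2]
    conv_lhs => rw [h1]
    rw [map_sum, Finset.mul_sum]
    apply Finset.sum_congr rfl
    intro k _
    simp only [f, map_mul, map_pow, map_inv₀, hσZ]
    rw [pow_succ' σ, AlgEquiv.mul_apply, pow_succ]
    have : Z ^ j * ((Z⁻¹ ^ j) ^ k * Z⁻¹ ^ j * σ ((σ ^ k) e)) = (Z ^ j * Z⁻¹ ^ j) * ((Z⁻¹ ^ j) ^ k * σ ((σ ^ k) e)) := by ring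
    rw [this, ← mul_pow, mul_inv_cancel₀ hZ0, one_pow, one_mul]
  have hsum : ∑ j ∈ Finset.range p, c j = p * e := by
    simp only [c]
    rw [Finset.sum_comm]
    have : ∀ k ∈ Finset.range p, k ≠ 0 → ∑ j ∈ Finset.range p, (Z⁻¹ ^ j) ^ k * (σ ^ k) e = 0 := by
      intro k hk hk0
      rw [← Finset.sum_mul]
      have hco : k.Coprime p := Nat.Coprime.symm ((hp.coprime_iff_not_dvd).mpr (Nat.not_dvd_of_pos_of_lt (Nat.pos_of_ne_zero hk0) (Finset.mem_range.mp hk)))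
      have hpr : IsPrimitiveRoot (Z⁻¹ ^ k) p := hZp.inv.pow_of_coprime k hco
      have := hpr.geom_sum_eq_zero hp.one_lt
      simp only [← pow_mul, mul_comm _ k] at this ⊢
      rw [this, zero_mul]
    rw [Finset.sum_eq_single 0 this (by intro h; exact absurd (Finset.mem_range.mpr hp.pos) h)]
    simp
  by_cases hall : ∀ j ∈ Finset.range p, j ≠ 0 → c j = 0
  · rw [Finset.sum_eq_single 0 hall (by intro h; exact absurd (Finset.mem_range.mpr hp.pos) h)] at hsum
    have h0 := hcσ 0
    rw [hsum, pow_zero, one_mul, map_mul, map_natCast] at h0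
    exact mul_left_cancel₀ (Nat.cast_ne_zero.mpr hp.ne_zero) h0
  · exfalso
    push Not at hall
    obtain ⟨j, hj, hj0, hcj⟩ := hall
    have hco : j.Coprime p := Nat.Coprime.symm ((hp.coprime_iff_not_dvd).mpr (Nat.not_dvd_of_pos_of_lt (Nat.pos_of_ne_zero hj0) (Finset.mem_range.mp hj)))
    obtain ⟨n, -, hn⟩ := Nat.exists_mul_mod_eq_one_of_coprime hco hp.one_lt
    set m := c j ^ n with hm
    have hm0 : m ≠ 0 := pow_ne_zero _ hcj
    have hmalg : m ∈ algebraicClosure F0 L := pow_mem (hcalg j) n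
    have hmσ : σ m = Z * m := by
      rw [hm, map_pow, hcσ, mul_pow, ← pow_mul]
      congr 1
      rw [← Nat.mod_add_div (j*n) p, hn, pow_add, pow_mul, hZp.pow_eq_one, one_pow, pow_one, mul_one]
    obtain ⟨γ, hγ⟩ := hfix (m ^ p) (by rw [map_pow, hmσ, mul_pow, hZp.pow_eq_one, one_mul])
    obtain ⟨h, hh⟩ := hfix (y / m) (by rw [map_div₀, hmσ, hσ, mul_div_mul_left _ _ hZ0])
    refine core γ h ?_ (hinj ?_)
    · have : IsAlgebraic F0 (algebraMap F' L γ) := by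
        rw [hγ, ← mem_algebraicClosure_iff]; exact pow_mem hmalg p
      exact (isAlgebraic_algebraMap_iff hinj).mp this
    · rw [map_mul, map_pow, hγ, hh, ← hy, ← mul_pow, mul_div_cancel₀ _ hm0]

end PGC

namespace PGC

open Polynomial

theorem kummer_main {p : ℕ} (hp : p.Prime) {F0 F F' L : Type} [Field F0] [Field F] [Field F']
    [Field L] [CharZero L]
    [Algebra F0 F] [Algebra F F'] [Algebra F0 F'] [IsScalarTower F0 F F']
    [Algebra F' L] [Algebra F L] [Algebra F0 L] [IsScalarTower F0 F L]
    [IsScalarTower F F' L] [IsScalarTower F0 F' L]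
    [FiniteDimensional F F'] [IsGalois F F'] (hcop : (Module.finrank F F').Coprime p)
    [FiniteDimensional F' L] (hL : Module.finrank F' L = p)
    (ζ : F') (hζ : IsPrimitiveRoot ζ p) (z : F') (hz0 : z ≠ 0) (y : L)
    (hy : y ^ p = algebraMap F' L z)
    (hlift : ∀ (τ : F' ≃ₐ[F] F') (w : L), w ^ p = algebraMap F' L (τ z) →
      ∃ g : L ≃ₐ[F] L, (∀ x, g (algebraMap F' L x) = algebraMap F' L (τ x)) ∧ g y = w)
    (hext : ∀ g g' : L ≃ₐ[F] L, (∀ x : F', g (algebraMap F' L x) = g' (algebraMap F' L x)) →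
      g y = g' y → g = g')
    (hi : ∀ (τ : F' ≃ₐ[F] F') (j : ℕ), τ ζ = ζ ^ j → ∃ u, u ≠ 0 ∧ τ z = z ^ j * u ^ p)
    (core : ∀ γ h : F', IsAlgebraic F0 γ → z ≠ γ * h ^ p) :
    ∃ (EP : Type) (_ : Field EP) (_ : Algebra F EP) (_ : Algebra F0 EP) (_ : IsScalarTower F0 F EP),
      IsGalois F EP ∧ Module.finrank F EP = p ∧
      ∀ e : EP, IsSeparable F0 e → e ∈ (algebraMap F EP).range := by
  have : NeZero p := ⟨hp.ne_zero⟩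
  have : FiniteDimensional F L := FiniteDimensional.trans F F' L
  have hinj : Function.Injective (algebraMap F' L) := (algebraMap F' L).injective
  have hy0 : y ≠ 0 := by
    rintro rfl
    rw [zero_pow hp.ne_zero] at hy
    exact hz0 (hinj (by rw [← hy, map_zero]))
  set Z : L := algebraMap F' L ζ with hZ
  have hZp : IsPrimitiveRoot Z p := hζ.map_of_injective hinj
  have hZ0 : Z ≠ 0 := hZp.ne_zero hp.ne_zero
  -- roots with the same p-th power
  have hrt : ∀ a b : L, b ≠ 0 → a ^ p = b ^ p → ∃ i : ℕ, a = Z ^ i * b := by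
    intro a b hb h
    obtain ⟨i, -, hi⟩ := hZp.eq_pow_of_pow_eq_one (ξ := a / b) (by
      rw [div_pow, h, div_self (pow_ne_zero _ hb)])
    exact ⟨i, by rw [hi, div_mul_cancel₀ _ hb]⟩
  obtain ⟨σ, hσF, hσy⟩ := hlift AlgEquiv.refl (Z * y) (by
    rw [mul_pow, hZp.pow_eq_one, one_mul, hy]; rfl)
  have hσF : ∀ x, σ (algebraMap F' L x) = algebraMap F' L x := hσF
  let σ' : L ≃ₐ[F'] L := AlgEquiv.ofRingEquiv (f := σ.toRingEquiv) hσF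
  have hσ' : ∀ x, σ' x = σ x := fun x => rfl
  have hσk : ∀ k : ℕ, (σ ^ k) y = Z ^ k * y := by
    intro k
    induction k with
    | zero => simp
    | succ k ih =>
      rw [pow_succ', AlgEquiv.mul_apply, ih, map_mul, map_pow, hσy, hσF, pow_succ]; ring
  have hσkF : ∀ (k : ℕ) x, (σ ^ k) (algebraMap F' L x) = algebraMap F' L x := by
    intro k x
    induction k with
    | zero => simp
    | succ k ih => rw [pow_succ', AlgEquiv.mul_apply, ih, hσF]
  have hσp : σ ^ p = 1 := by
    apply hext
    · intro x; rw [hσkF]; rfl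
    · rw [hσk, hZp.pow_eq_one, one_mul]; rfl
  have hσ'k : ∀ (k : ℕ) x, (σ' ^ k) x = (σ ^ k) x := by
    intro k x
    induction k with
    | zero => simp
    | succ k ih => rw [pow_succ', pow_succ', AlgEquiv.mul_apply, AlgEquiv.mul_apply, ih, hσ']
  have hσ'p : σ' ^ p = 1 := by
    ext x; rw [hσ'k, hσp]; rfl
  have hσ1 : σ ≠ 1 := by
    intro h
    rw [h] at hσy
    have : Z = 1 := by
      have h1 : y = Z * y := hσy
      exact (mul_right_cancel₀ hy0 (by rw [one_mul]; exact h1)).symm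
    exact hZp.ne_one hp.one_lt this
  have hσ'1 : σ' ≠ 1 := by
    intro h
    apply hσ1
    ext x
    rw [← hσ', h]; rfl
  have : Fact p.Prime := ⟨hp⟩
  have hord : orderOf σ' = p := orderOf_eq_prime hσ'p hσ'1
  have hfix : ∀ x, σ x = x → x ∈ (algebraMap F' L).range := by
    have h1 := IntermediateField.finrank_fixedField_eq_card (Subgroup.zpowers σ')
    rw [Nat.card_zpowers, hord] at h1
    have h2 := Module.finrank_mul_finrank F' (IntermediateField.fixedField (Subgroup.zpowers σ')) L
    rw [h1, hL] at h2
    have h3 : IntermediateField.fixedField (Subgroup.zpowers σ') = ⊥ :=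
      IntermediateField.finrank_eq_one_iff.mp (Nat.eq_of_mul_eq_mul_right hp.pos (by rw [h2, one_mul]))
    intro x hx
    have : x ∈ IntermediateField.fixedField (Subgroup.zpowers σ') := by
      rw [IntermediateField.mem_fixedField_iff]
      intro f hf
      classical
      obtain ⟨k, -, rfl⟩ := (isOfFinOrder_of_finite σ').mem_zpowers_iff_mem_range_orderOf.mp hf |> Finset.mem_image.mp
      have : ∀ k : ℕ, (σ' ^ k) x = x := by
        intro k
        induction k with
        | zero => rfl
        | succ k ih => rw [pow_succ', AlgEquiv.mul_apply, ih, hσ', hx]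
      exact this k
    rw [h3] at this
    exact this
  have heig : ∀ e : L, IsAlgebraic F0 e → σ e = e := fun e he =>
    eig hp ζ hζ z y hy σ' hσy (fun x => by rw [hσ'p]; rfl) hfix core e he
  have hτζ : ∀ τ : F' ≃ₐ[F] F', ∃ j : ℕ, τ ζ = ζ ^ j := by
    intro τ
    obtain ⟨i, -, hi⟩ := hζ.eq_pow_of_pow_eq_one (ξ := τ ζ) (by
      rw [← map_pow, hζ.pow_eq_one, map_one])
    exact ⟨i, hi.symm⟩
  have hgal : IsGalois F L := by
    apply IsGalois.of_fixedField_eq_bot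
    rw [eq_bot_iff]
    intro x hx
    rw [IntermediateField.mem_fixedField_iff] at hx
    obtain ⟨x', rfl⟩ := hfix x (hx σ trivial)
    have : x' ∈ (⊥ : IntermediateField F F') := by
      rw [IsGalois.mem_bot_iff_fixed]
      intro τ
      obtain ⟨j, hj⟩ := hτζ τ
      obtain ⟨u, hu0, hu⟩ := hi τ j hj
      obtain ⟨g, hg, -⟩ := hlift τ (y ^ j * algebraMap F' L u) (by
        rw [hu, mul_pow, pow_right_comm, hy, map_mul, map_pow, map_pow])
      have := hx g trivial
      rw [hg] at this
      exact hinj this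
    obtain ⟨w, hw⟩ := this
    refine ⟨w, ?_⟩
    have hw : algebraMap F F' w = x' := hw
    rw [← hw, ← IsScalarTower.algebraMap_apply]
    rfl
  -- structure of g
  have hstr : ∀ g : L ≃ₐ[F] L, σ * g = g * σ := by
    intro g
    set τ := g.restrictNormal F' with hτ
    have hgF : ∀ x, g (algebraMap F' L x) = algebraMap F' L (τ x) := fun x =>
      (AlgEquiv.restrictNormal_commutes g F' x).symm
    obtain ⟨j, hj⟩ := hτζ τ
    obtain ⟨u, hu0, hu⟩ := hi τ j hj
    obtain ⟨i, hgy⟩ := hrt (g y) (y ^ j * algebraMap F' L u)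
      (mul_ne_zero (pow_ne_zero _ hy0) (by rwa [Ne, map_eq_zero])) (by
        rw [← map_pow, hy, hgF, hu, mul_pow, pow_right_comm, hy, map_mul, map_pow, map_pow])
    apply hext
    · intro x
      rw [AlgEquiv.mul_apply, AlgEquiv.mul_apply, hσF, hgF, hσF]
    · rw [AlgEquiv.mul_apply, AlgEquiv.mul_apply, hσy, map_mul, hZ, hgF, hj, hgy]
      simp only [map_mul, map_pow, hσF, hσy, hZ]
      ring
  let C : Subgroup (L ≃ₐ[F] L) := (AlgEquiv.restrictNormalHom F').ker
  have hCF : ∀ g ∈ C, ∀ x, g (algebraMap F' L x) = algebraMap F' L x := by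
    intro g hg x
    rw [← AlgEquiv.restrictNormal_commutes g F' x]
    have : AlgEquiv.restrictNormal g F' = 1 := hg
    rw [this]; rfl
  have hCσ : ∀ g ∈ C, ∃ k : ℕ, g = σ ^ k := by
    intro g hg
    obtain ⟨i, hgy⟩ := hrt (g y) y hy0 (by rw [← map_pow, hy, hCF g hg])
    refine ⟨i, hext _ _ ?_ ?_⟩
    · intro x; rw [hCF g hg, hσkF]
    · rw [hgy, hσk]
  have hσC : σ ∈ C := by
    change AlgEquiv.restrictNormal σ F' = 1
    ext x
    apply hinj
    rw [AlgEquiv.restrictNormal_commutes, hσF]; rfl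
  have hCcen : ∀ c ∈ C, ∀ g, c * g = g * c := by
    intro c hc g
    obtain ⟨k, rfl⟩ := hCσ c hc
    exact (Commute.pow_left (hstr g) k)
  have hCidx : C.index = Module.finrank F F' := by
    rw [Subgroup.index_ker, MonoidHom.range_eq_top.mpr (AlgEquiv.restrictNormalHom_surjective L),
      Subgroup.card_top, IsGalois.card_aut_eq_finrank]
  have hCcard : Nat.card C = p := by
    have h1 := C.card_mul_index
    rw [hCidx, IsGalois.card_aut_eq_finrank, ← Module.finrank_mul_finrank F F' L, hL, mul_comm] at h1
    exact Nat.eq_of_mul_eq_mul_left Module.finrank_pos h1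
  have hCn : C.Normal := MonoidHom.normal_ker _
  obtain ⟨H, hH⟩ := Subgroup.exists_right_complement'_of_coprime (N := C) (by
    rw [hCcard, hCidx]; exact hcop.symm)
  have hdec : ∀ g : L ≃ₐ[F] L, ∃ c ∈ C, ∃ h ∈ H, g = c * h := by
    intro g
    obtain ⟨⟨c, h⟩, hch⟩ := hH.2 g
    exact ⟨c, c.2, h, h.2, hch.symm⟩
  have hHn : H.Normal := by
    constructor
    intro n hn g
    obtain ⟨c, hc, h, hh, rfl⟩ := hdec g
    have : c * h * n * (c * h)⁻¹ = h * n * h⁻¹ := by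
      rw [mul_inv_rev, mul_assoc c, mul_assoc c, hCcen c hc]
      group
    rw [this]
    exact H.mul_mem (H.mul_mem hh hn) (H.inv_mem hh)
  refine ⟨IntermediateField.fixedField H, inferInstance, inferInstance, inferInstance,
    inferInstance, IsGalois.of_fixedField_normal_subgroup H, ?_, ?_⟩
  · rw [IntermediateField.finrank_eq_fixingSubgroup_index, IntermediateField.fixingSubgroup_fixedField,
      hH.index_eq_card, hCcard]
  · intro e he
    have hea : IsAlgebraic F0 (e : L) := by
      have : IsAlgebraic F0 e := he.isIntegral.isAlgebraic
      exact this.algHom ((IntermediateField.fixedField H).val.restrictScalars F0)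
    have hσe := heig e hea
    have hσke : ∀ k : ℕ, (σ ^ k) (e : L) = e := by
      intro k
      induction k with
      | zero => rfl
      | succ k ih => rw [pow_succ', AlgEquiv.mul_apply, ih, hσe]
    have : (e : L) ∈ (⊥ : IntermediateField F L) := by
      rw [IsGalois.mem_bot_iff_fixed]
      intro g
      obtain ⟨c, hc, h, hh, rfl⟩ := hdec g
      obtain ⟨k, rfl⟩ := hCσ c hc
      rw [AlgEquiv.mul_apply, (IntermediateField.mem_fixedField_iff H _).mp e.2 h hh, hσke]
    obtain ⟨w, hw⟩ := this
    exact ⟨w, Subtype.ext hw⟩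

theorem kummer_exists {p : ℕ} (hp : p.Prime) {F0 F F' : Type} [Field F0] [Field F] [Field F']
    [CharZero F']
    [Algebra F0 F] [Algebra F F'] [Algebra F0 F'] [IsScalarTower F0 F F']
    [FiniteDimensional F F'] [IsGalois F F'] (hcop : (Module.finrank F F').Coprime p)
    (ζ : F') (hζ : IsPrimitiveRoot ζ p) (z : F') (hz0 : z ≠ 0)
    (hi : ∀ (τ : F' ≃ₐ[F] F') (j : ℕ), τ ζ = ζ ^ j → ∃ u, u ≠ 0 ∧ τ z = z ^ j * u ^ p)
    (core : ∀ γ h : F', IsAlgebraic F0 γ → z ≠ γ * h ^ p) :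
    ∃ (EP : Type) (_ : Field EP) (_ : Algebra F EP) (_ : Algebra F0 EP) (_ : IsScalarTower F0 F EP),
      IsGalois F EP ∧ Module.finrank F EP = p ∧
      ∀ e : EP, IsSeparable F0 e → e ∈ (algebraMap F EP).range := by
  have hirr : Irreducible (X ^ p - C z : F'[X]) := X_pow_sub_C_irreducible_of_prime hp (by
    intro b hb
    exact core 1 b isAlgebraic_one (by rw [one_mul, hb]))
  have : Fact (Irreducible (X ^ p - C z : F'[X])) := ⟨hirr⟩
  let L := AdjoinRoot (X ^ p - C z : F'[X])
  have : CharZero L := charZero_of_injective_algebraMap (algebraMap F' L).injective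
  have : FiniteDimensional F' L := (AdjoinRoot.powerBasis hirr.ne_zero).finite
  have hL : Module.finrank F' L = p := by
    rw [(AdjoinRoot.powerBasis hirr.ne_zero).finrank, AdjoinRoot.powerBasis_dim, natDegree_X_pow_sub_C]
  have hy : (AdjoinRoot.root (X ^ p - C z : F'[X]) : L) ^ p = algebraMap F' L z := by
    have := AdjoinRoot.eval₂_root (X ^ p - C z : F'[X])
    rw [eval₂_sub, eval₂_X_pow, eval₂_C, sub_eq_zero] at this
    exact this
  have : FiniteDimensional F L := FiniteDimensional.trans F F' L
  refine kummer_main (L := L) hp hcop hL ζ hζ z hz0 (AdjoinRoot.root _) hy ?_ ?_ hi core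
  · intro τ w hw
    let i : F' →ₐ[F] L := (IsScalarTower.toAlgHom F F' L).comp (τ : F' →ₐ[F] F')
    have hev : eval₂ (i : F' →+* L) w (X ^ p - C z) = 0 := by
      rw [eval₂_sub, eval₂_X_pow, eval₂_C, hw, sub_eq_zero]
      rfl
    let g := AdjoinRoot.liftAlgHom (X ^ p - C z) i w hev
    refine ⟨AlgEquiv.ofBijective g (AlgHom.bijective g), ?_, ?_⟩
    · intro x
      exact AdjoinRoot.liftAlgHom_of _ i w hev x
    · exact AdjoinRoot.liftAlgHom_root _ i w hev
  · intro g g' h1 h2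
    have : (g : L →+* L) = (g' : L →+* L) := by
      apply AdjoinRoot.ringHom_ext
      · ext x; exact h1 x
      · exact h2
    ext x
    exact RingHom.congr_fun this x

end PGC

namespace PGC

open Polynomial

noncomputable def aa (p : ℕ) {R : Type} [CommRing R] (ζ φ : R) (i : (ZMod p)ˣ) : R :=
  if p = 2 then 1 + φ else 1 + (ζ ^ (i : ZMod p).val - 1) * φ

noncomputable def zz (p : ℕ) [Fact p.Prime] {R : Type} [CommRing R] (ζ φ : R) : R :=
  ∏ i : (ZMod p)ˣ, aa p ζ φ i ^ ((i⁻¹ : (ZMod p)ˣ) : ZMod p).val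

theorem map_aa (p : ℕ) {R S : Type} [CommRing R] [CommRing S] (f : R →+* S) (ζ φ : R)
    (i : (ZMod p)ˣ) : f (aa p ζ φ i) = aa p (f ζ) (f φ) i := by
  unfold aa
  split_ifs <;> simp

theorem map_zz (p : ℕ) [Fact p.Prime] {R S : Type} [CommRing R] [CommRing S] (f : R →+* S) (ζ φ : R) :
    f (zz p ζ φ) = zz p (f ζ) (f φ) := by
  simp only [zz, map_prod, map_pow, map_aa]

theorem aa_ne (p : ℕ) [hp : Fact p.Prime] {R : Type} [CommRing R] [IsDomain R] (ζ φ : R) (h : zz p ζ φ ≠ 0)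
    (i : (ZMod p)ˣ) : aa p ζ φ i ≠ 0 := by
  rw [zz, Finset.prod_ne_zero_iff] at h
  have := h i (Finset.mem_univ _)
  intro h0
  rw [h0] at this
  apply this
  apply zero_pow
  rw [Ne, ZMod.val_eq_zero]
  exact Units.ne_zero _

theorem zz_equiv (p : ℕ) [hp : Fact p.Prime] {R : Type} [Field R] (ζ φ : R) (hζ : ζ ^ p = 1)
    (h : zz p ζ φ ≠ 0) (j : ℕ) (hj : j.Coprime p) :
    ∃ u, u ≠ 0 ∧ zz p (ζ ^ j) φ = zz p ζ φ ^ j * u ^ p := by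
  let J : (ZMod p)ˣ := ZMod.unitOfCoprime j hj
  have hJ : ((J : (ZMod p)ˣ) : ZMod p) = j := ZMod.coe_unitOfCoprime j hj
  have hpow : ∀ a b : ℕ, (a : ZMod p) = b → ζ ^ a = ζ ^ b := by
    intro a b hab
    rw [ZMod.natCast_eq_natCast_iff'] at hab
    rw [← Nat.mod_add_div a p, ← Nat.mod_add_div b p, hab, pow_add, pow_add, pow_mul, pow_mul, hζ,
      one_pow, one_pow]
  have h1 : ∀ i, aa p (ζ ^ j) φ i = aa p ζ φ (i * J) := by
    intro i
    unfold aa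
    split_ifs
    · rfl
    · congr 3
      rw [← pow_mul]
      apply hpow
      push_cast
      rw [ZMod.natCast_zmod_val, ZMod.natCast_zmod_val, hJ, mul_comm]
  have h2 : zz p (ζ ^ j) φ = ∏ i : (ZMod p)ˣ, aa p ζ φ i ^ ((i⁻¹ * J : (ZMod p)ˣ) : ZMod p).val := by
    unfold zz
    simp only [h1]
    apply Fintype.prod_equiv (Equiv.mulRight J)
    intro i
    have : (i * J)⁻¹ * J = i⁻¹ := by rw [mul_inv, inv_mul_cancel_right]
    rw [Equiv.coe_mulRight, this]
  have h3 : ∀ i : (ZMod p)ˣ, ∃ m : ℤ, (((i⁻¹ * J : (ZMod p)ˣ) : ZMod p).val : ℤ) =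
      ((i⁻¹ : (ZMod p)ˣ) : ZMod p).val * j + m * p := by
    intro i
    have : ((((i⁻¹ * J : (ZMod p)ˣ) : ZMod p).val : ℤ) : ZMod p) =
      ((((i⁻¹ : (ZMod p)ˣ) : ZMod p).val * j : ℤ) : ZMod p) := by
      push_cast
      rw [ZMod.natCast_zmod_val, ZMod.natCast_zmod_val, hJ]
    rw [ZMod.intCast_eq_intCast_iff_dvd_sub] at this
    obtain ⟨m, hm⟩ := this
    exact ⟨-m, by linear_combination -hm⟩
  choose m hm using h3
  have hne := aa_ne p ζ φ h
  refine ⟨∏ i, aa p ζ φ i ^ (m i), Finset.prod_ne_zero_iff.mpr fun i _ => zpow_ne_zero _ (hne i), ?_⟩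
  rw [h2, zz, ← Finset.prod_pow, ← Finset.prod_pow, ← Finset.prod_mul_distrib]
  apply Finset.prod_congr rfl
  intro i _
  rw [← zpow_natCast (aa p ζ φ i), hm, zpow_add₀ (hne i), zpow_mul, zpow_mul, zpow_natCast, zpow_natCast, zpow_natCast]

theorem X_mul_der_lac (p : ℕ) (k : Type) [Field k] [CharP k p] :
    PowerSeries.X * PowerSeries.derivative k (lac p k) = lac p k := by
  ext n
  cases n with
  | zero =>
    simp [lac]
  | succ n =>
    rw [PowerSeries.coeff_succ_X_mul, PowerSeries.coeff_derivative]
    simp only [lac, PowerSeries.coeff_mk]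
    split_ifs with h
    · obtain ⟨N, hN⟩ := h
      have : ((n + 1 : ℕ) : k) = 1 := by rw [hN]; simp
      push_cast at this
      rw [this, one_mul]
    · simp

theorem map_der {R S : Type} [CommRing R] [CommRing S] (f : R →+* S) (g : PowerSeries R) :
    PowerSeries.map f (PowerSeries.derivative R g) = PowerSeries.derivative S (PowerSeries.map f g) := by
  ext n
  simp [PowerSeries.coeff_derivative]

theorem der_lac_not_alg (p : ℕ) (hp : 0 < p) (k : Type) [Field k] [CharP k p] :
    ¬ IsAlgebraic k[X] (algebraMap _ (FractionRing (PowerSeries k)) (PowerSeries.derivative k (lac p k))) := by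
  intro h
  apply lac_not_alg p hp k
  rw [← X_mul_der_lac p k, map_mul]
  refine IsAlgebraic.mul ?_ h
  have : algebraMap (PowerSeries k) (FractionRing (PowerSeries k)) PowerSeries.X =
    algebraMap k[X] (FractionRing (PowerSeries k)) X := by
    rw [IsScalarTower.algebraMap_apply k[X] (PowerSeries k)]
    congr 1
    exact Polynomial.coe_X.symm
  rw [this]
  exact isAlgebraic_algebraMap _

theorem der_lac_not_alg2 (p : ℕ) (hp : 0 < p) (k : Type) [Field k] [CharP k p] :
    ¬ IsAlgebraic k[X] (algebraMap _ (FractionRing (PowerSeries k)) (PowerSeries.derivative k (lac p k))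
      / algebraMap _ (FractionRing (PowerSeries k)) (1 + lac p k)) := by
  intro h
  apply lac_not_alg p hp k
  have hX : algebraMap (PowerSeries k) (FractionRing (PowerSeries k)) PowerSeries.X =
    algebraMap k[X] (FractionRing (PowerSeries k)) X := by
    rw [IsScalarTower.algebraMap_apply k[X] (PowerSeries k)]
    congr 1
    exact Polynomial.coe_X.symm
  have hXa : IsAlgebraic k[X] (algebraMap (PowerSeries k) (FractionRing (PowerSeries k)) PowerSeries.X) := by
    rw [hX]; exact isAlgebraic_algebraMap _
  have h2 := h.mul hXa
  set A := algebraMap (PowerSeries k) (FractionRing (PowerSeries k)) with hA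
  have h0 : A (1 + lac p k) ≠ 0 := by
    intro h0
    have : lac p k = -1 := by
      have := (IsFractionRing.injective (PowerSeries k) (FractionRing (PowerSeries k))) (h0.trans (map_zero A).symm)
      linear_combination this
    apply lac_not_alg p hp k
    rw [this, map_neg, map_one]
    exact isAlgebraic_one.neg
  have h3 : A (PowerSeries.derivative k (lac p k)) / A (1 + lac p k) * A PowerSeries.X = A (lac p k) / A (1 + lac p k) := by
    rw [div_mul_eq_mul_div, ← map_mul, mul_comm, X_mul_der_lac]
  rw [h3] at h2
  have h4 : A (lac p k) = (A (lac p k) / A (1 + lac p k)) / (1 - A (lac p k) / A (1 + lac p k)) := by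
    rw [map_add, map_one] at h0 ⊢
    have : 1 - A (lac p k) / (1 + A (lac p k)) = 1 / (1 + A (lac p k)) := by
      field_simp; ring
    rw [this]
    field_simp
  rw [h4, div_eq_mul_inv]
  exact h2.mul ((isAlgebraic_one.sub h2).inv)

end PGC

namespace PGC

open Polynomial

theorem zmod2_units (i : (ZMod 2)ˣ) : i = 1 := by
  revert i; decide

theorem zmod2_val : (((1 : (ZMod 2)ˣ)⁻¹ : (ZMod 2)ˣ) : ZMod 2).val = 1 := by decide

theorem zz_core {T : Type} [CommRing T] [IsDomain T] [IsDiscreteValuationRing T] [CharZero T]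
    (p : ℕ) [hp : Fact p.Prime] [CharP (IsLocalRing.ResidueField T) p] (ζ : T)
    (hζ : IsPrimitiveRoot ζ p) :
    zz p (PowerSeries.C ζ) (lac p T) ≠ 0 ∧
    ∀ γ h : FractionRing (PowerSeries T), IsAlgebraic T[X] γ →
      algebraMap (PowerSeries T) (FractionRing (PowerSeries T)) (zz p (PowerSeries.C ζ) (lac p T)) ≠ γ * h ^ p := by
  set r := IsLocalRing.residue T with hr
  set R := PowerSeries.map r with hR
  have hpres : r (p : T) = 0 := by rw [map_natCast]; exact CharP.cast_eq_zero (IsLocalRing.ResidueField T) p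
  have hpu : ¬ IsUnit (p : T) := fun h => by
    have := h.map r
    rw [hpres] at this
    exact not_isUnit_zero this
  by_cases h2 : p = 2
  · have hz : zz p (PowerSeries.C ζ) (lac p T) = 1 + lac p T := by
      subst h2
      have hu : (Finset.univ : Finset (ZMod 2)ˣ) = {1} := by
        ext i
        exact ⟨fun _ => by rw [zmod2_units i]; exact Finset.mem_singleton_self _,
          fun _ => Finset.mem_univ _⟩
      rw [zz, hu, Finset.prod_singleton, aa, if_pos rfl]
      rw [zmod2_val, pow_one]
    have hRz : R (1 + lac p T) = 1 + lac p (IsLocalRing.ResidueField T) := by rw [map_add, map_one, hR, map_lac]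
    have hz0 : R (1 + lac p T) ≠ 0 := by
      rw [hRz]
      intro h0
      apply lac_not_alg p hp.out.pos (IsLocalRing.ResidueField T)
      have : lac p (IsLocalRing.ResidueField T) = -1 := by linear_combination h0
      rw [this, map_neg, map_one]
      exact isAlgebraic_one.neg
    rw [hz]
    refine ⟨fun h => hz0 (by rw [h, map_zero]), ?_⟩
    intro γ h hγ
    refine core_mixed p hp.out.pos 1 (p : T) (by rw [one_mul]) hpu (1 + lac p T)
      (PowerSeries.derivative T (lac p T)) ?_ hz0 ?_ γ h hγ
    · rw [map_add, PowerSeries.derivative_one, zero_add, map_one, one_mul]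
    · rw [← hR, hRz, hR, map_der, map_lac]
      exact der_lac_not_alg2 p hp.out.pos (IsLocalRing.ResidueField T)
  · have hp3 : 3 ≤ p := by have := hp.out.two_le; omega
    set l := ζ - 1 with hl
    have hrζ : r ζ = 1 := by
      have h1 : (r ζ - 1) ^ p = 0 := by
        rw [sub_pow_char, ← map_pow, hζ.pow_eq_one]; simp
      exact sub_eq_zero.mp (pow_eq_zero_iff hp.out.ne_zero |>.mp h1)
    have hlu : ¬ IsUnit l := fun h => by
      have := h.map r
      rw [hl, map_sub, hrζ, map_one, sub_self] at this
      exact not_isUnit_zero this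
    obtain ⟨ν, hν, hνu⟩ : ∃ ν : T, (p : T) = l * ν ∧ ¬ IsUnit ν := by
      obtain ⟨m, rfl⟩ : ∃ m, p = (m + 1 + 1) + 1 := ⟨p - 3, by omega⟩
      have := hζ.prod_one_sub_pow_eq_order
      rw [Finset.prod_range_succ', Finset.prod_range_succ'] at this
      set P := ∏ k ∈ Finset.range m, (1 - ζ ^ (k + 1 + 1 + 1)) with hP
      refine ⟨l * ((1 + ζ) * P), ?_, fun h => hlu (isUnit_of_mul_isUnit_left h)⟩
      push_cast at this ⊢
      rw [hl]
      linear_combination -this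
    let n : (ZMod p)ˣ → ℕ := fun i => ((i⁻¹ : (ZMod p)ˣ) : ZMod p).val
    let g : (ZMod p)ˣ → T := fun i => ∑ k ∈ Finset.range (i : ZMod p).val, ζ ^ k
    have hg : ∀ i : (ZMod p)ˣ, ζ ^ (i : ZMod p).val - 1 = l * g i := by
      intro i
      rw [hl, mul_comm, geom_sum_mul]
    have ha : ∀ i, aa p (PowerSeries.C ζ) (lac p T) i =
        1 + PowerSeries.C l * PowerSeries.C (g i) * lac p T := by
      intro i
      rw [aa, if_neg h2, ← map_pow, ← map_one PowerSeries.C, ← map_sub, hg, map_mul, map_one]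
    have hRa : ∀ i, R (aa p (PowerSeries.C ζ) (lac p T) i) = 1 := by
      intro i
      have : R (PowerSeries.C l) = 0 := by
        rw [hR, PowerSeries.map_C, hl, map_sub, hrζ, map_one, sub_self, map_zero]
      rw [ha, map_add, map_mul, map_mul, this, map_one]; ring
    have key : ∀ S : Finset (ZMod p)ˣ, ∃ s : PowerSeries T,
        PowerSeries.derivative T (∏ i ∈ S, aa p (PowerSeries.C ζ) (lac p T) i ^ n i) =
          PowerSeries.C l * s ∧
        R (∏ i ∈ S, aa p (PowerSeries.C ζ) (lac p T) i ^ n i) = 1 ∧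
        R s = (∑ i ∈ S, PowerSeries.C (r (n i * g i))) * PowerSeries.derivative (IsLocalRing.ResidueField T) (lac p (IsLocalRing.ResidueField T)) := by
      intro S
      classical
      induction S using Finset.induction_on with
      | empty => exact ⟨0, by rw [Finset.prod_empty, PowerSeries.derivative_one, mul_zero], by simp, by simp⟩
      | insert a S haS ih =>
        obtain ⟨s, hs1, hs2, hs3⟩ := ih
        rw [Finset.prod_insert haS, Finset.sum_insert haS]
        set A := aa p (PowerSeries.C ζ) (lac p T) a with hA
        set Q := ∏ i ∈ S, aa p (PowerSeries.C ζ) (lac p T) i ^ n i with hQ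
        have hdA : PowerSeries.derivative T A = PowerSeries.C l * (PowerSeries.C (g a) * PowerSeries.derivative T (lac p T)) := by
          rw [hA, ha, map_add, PowerSeries.derivative_one, zero_add, ← map_mul, Derivation.leibniz,
            PowerSeries.derivative_C, smul_zero, add_zero, smul_eq_mul, map_mul, mul_assoc]
        have hRA : R A = 1 := hRa a
        refine ⟨A ^ n a * s + Q * (n a * A ^ (n a - 1) * (PowerSeries.C (g a) * PowerSeries.derivative T (lac p T))), ?_, ?_, ?_⟩
        · rw [Derivation.leibniz, hs1, PowerSeries.derivative_pow, hdA, smul_eq_mul, smul_eq_mul]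
          ring
        · rw [map_mul, hs2, map_pow, hRA, one_pow, one_mul]
        · simp only [map_add, map_mul, hs2, map_pow, hRA, hs3, one_pow, one_mul, map_natCast, mul_one]
          rw [hR, map_der, map_lac, PowerSeries.map_C]
          ring
    obtain ⟨s, hs1, hs2, hs3⟩ := key Finset.univ
    have hzdef : zz p (PowerSeries.C ζ) (lac p T) =
      ∏ i ∈ Finset.univ, aa p (PowerSeries.C ζ) (lac p T) i ^ n i := rfl
    rw [← hzdef] at hs1 hs2
    have hsum : ∑ i : (ZMod p)ˣ, (PowerSeries.C (r (n i * g i)) : PowerSeries (IsLocalRing.ResidueField T)) = -1 := by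
      have h1 : ∀ i : (ZMod p)ˣ, r (n i * g i) = 1 := by
        intro i
        have hgi : r (g i) = ((i : ZMod p).val : IsLocalRing.ResidueField T) := by
          simp only [g, map_sum, map_pow, hrζ, one_pow, Finset.sum_const, Finset.card_range, nsmul_eq_mul, mul_one]
        rw [map_mul, map_natCast, hgi, ← Nat.cast_mul]
        have : ((n i * (i : ZMod p).val : ℕ) : IsLocalRing.ResidueField T) = ((1 : ℕ) : IsLocalRing.ResidueField T) := by
          rw [CharP.natCast_eq_natCast (IsLocalRing.ResidueField T) p, ← ZMod.natCast_eq_natCast_iff]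
          push_cast
          rw [ZMod.natCast_zmod_val, ZMod.natCast_zmod_val, Units.inv_mul]
        rw [this, Nat.cast_one]
      simp only [h1, map_one, Finset.sum_const, Finset.card_univ, ZMod.card_units_eq_totient, Nat.totient_prime hp.out, nsmul_eq_mul, mul_one]
      have hcp : CharP (PowerSeries (IsLocalRing.ResidueField T)) p := charP_of_injective_algebraMap (R := IsLocalRing.ResidueField T) (by
        exact PowerSeries.C_injective) p
      rw [Nat.cast_sub hp.out.one_le, CharP.cast_eq_zero, Nat.cast_one, zero_sub]
    refine ⟨fun h => by rw [h, map_zero] at hs2; exact zero_ne_one hs2, ?_⟩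
    intro γ h hγ
    refine core_mixed p hp.out.pos l ν hν hνu _ s hs1 (by rw [← hR, hs2]; exact one_ne_zero) ?_ γ h hγ
    rw [← hR, hs2, hs3, hsum, map_one, div_one, neg_one_mul, map_neg]
    intro hn
    exact der_lac_not_alg p hp.out.pos (IsLocalRing.ResidueField T) (by simpa using hn.neg)

end PGC

namespace PGC

open Polynomial

theorem charP_of_prime {R : Type} [CommRing R] [IsDomain R] {p : ℕ} (hp : p.Prime)
    (h : (p : R) = 0) : CharP R p := by
  obtain ⟨q, hq⟩ := CharP.exists R
  have h1 : q ∣ p := (CharP.cast_eq_zero_iff R q p).mp h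
  rcases (Nat.dvd_prime hp).mp h1 with h2 | h2
  · exact absurd h2 (CharP.char_ne_one R q)
  · rwa [← h2]

theorem exists_ext (T : Type) [CommRing T] [IsDomain T] [IsDiscreteValuationRing T] [CharZero T]
    (p : ℕ) [hp : Fact p.Prime] [CharP (IsLocalRing.ResidueField T) p] :
    ∃ (T' : Type) (_ : CommRing T') (_ : IsDomain T') (_ : IsDiscreteValuationRing T')
      (_ : CharZero T') (_ : CharP (IsLocalRing.ResidueField T') p) (j : T →+* T') (ζ : T'),
      Function.Injective j ∧ IsPrimitiveRoot ζ p := by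
  have hne : NeZero p := ⟨hp.out.ne_zero⟩
  let K := FractionRing T
  have : CharZero K := charZero_of_injective_algebraMap (IsFractionRing.injective T K)
  have : NeZero ((p : ℕ) : K) := ⟨Nat.cast_ne_zero.mpr hp.out.ne_zero⟩
  let N := CyclotomicField p K
  have : FiniteDimensional K N := IsCyclotomicExtension.finiteDimensional {p} K N
  let A := integralClosure T N
  have hded : IsDedekindDomain A := integralClosure.isDedekindDomain T K N
  have hTN : Function.Injective (algebraMap T N) := by
    rw [IsScalarTower.algebraMap_eq T K N]
    exact (algebraMap K N).injective.comp (IsFractionRing.injective T K)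
  have hTA : Function.Injective (algebraMap T A) := by
    intro a b h
    apply hTN
    exact congrArg (algebraMap A N) h
  obtain ⟨M, hM⟩ := Ideal.exists_maximal A
  have hMc : (Ideal.comap (algebraMap T A) M).IsMaximal :=
    Ideal.isMaximal_comap_of_isIntegral_of_isMaximal M
  have hMc' := IsLocalRing.eq_maximalIdeal hMc
  have hpM : (p : A) ∈ M := by
    have : (p : T) ∈ Ideal.comap (algebraMap T A) M := by
      rw [hMc', ← IsLocalRing.residue_eq_zero_iff, map_natCast]
      exact CharP.cast_eq_zero _ p
    rw [Ideal.mem_comap, map_natCast] at this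
    exact this
  have : CharZero A := charZero_of_injective_algebraMap hTA
  have hMb : M ≠ ⊥ := by
    rintro rfl
    exact hp.out.ne_zero (Nat.cast_eq_zero.mp (Ideal.mem_bot.mp hpM))
  have hMp : M.IsPrime := hM.isPrime
  let T' := Localization.AtPrime M
  have hdom : IsDomain T' := IsLocalization.isDomain_localization M.primeCompl_le_nonZeroDivisors
  have hAT : Function.Injective (algebraMap A T') :=
    IsLocalization.injective T' M.primeCompl_le_nonZeroDivisors
  have hdvr : IsDiscreteValuationRing T' :=
    IsLocalization.AtPrime.isDiscreteValuationRing_of_dedekind_domain A hMb T'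
  have hc0 : CharZero T' := charZero_of_injective_algebraMap hAT
  have hpT : (p : IsLocalRing.ResidueField T') = 0 := by
    rw [← map_natCast (IsLocalRing.residue T'), IsLocalRing.residue_eq_zero_iff,
      ← map_natCast (algebraMap A T')]
    exact (IsLocalization.AtPrime.to_map_mem_maximal_iff T' M _).mpr hpM
  have hcp : CharP (IsLocalRing.ResidueField T') p := by
    exact charP_of_prime hp.out hpT
  have hz := IsCyclotomicExtension.zeta_spec p K N
  let ζA : A := ⟨IsCyclotomicExtension.zeta p K N, by
    exact IsIntegral.of_pow hp.out.pos (by rw [hz.pow_eq_one]; exact isIntegral_one)⟩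
  have hζA : IsPrimitiveRoot ζA p := by
    rw [← IsPrimitiveRoot.coe_submonoidClass_iff]
    exact hz
  exact ⟨T', inferInstance, hdom, hdvr, hc0, hcp, (algebraMap A T').comp (algebraMap T A),
    algebraMap A T' ζA, hAT.comp hTA, hζA.map_of_injective hAT⟩

end PGC

namespace PGC

open Polynomial

theorem mixed_exists {T : Type} [CommRing T] [IsDomain T] [IsDiscreteValuationRing T] [CharZero T]
    (p : ℕ) [hp : Fact p.Prime] [CharP (IsLocalRing.ResidueField T) p]
    {F0 : Type} [Field F0] [Algebra T[X] F0] [IsFractionRing T[X] F0]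
    [Algebra F0 (FractionRing (PowerSeries T))] [IsScalarTower T[X] F0 (FractionRing (PowerSeries T))] :
    ∃ (EP : Type) (_ : Field EP) (_ : Algebra (FractionRing (PowerSeries T)) EP)
      (_ : Algebra F0 EP) (_ : IsScalarTower F0 (FractionRing (PowerSeries T)) EP),
      IsGalois (FractionRing (PowerSeries T)) EP ∧
      Module.finrank (FractionRing (PowerSeries T)) EP = p ∧
      ∀ e : EP, IsSeparable F0 e → e ∈ (algebraMap (FractionRing (PowerSeries T)) EP).range := by
  obtain ⟨T', _, _, _, _, _, j, ζ, hj, hζ⟩ := exists_ext T p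
  have hne : NeZero p := ⟨hp.out.ne_zero⟩
  let F := FractionRing (PowerSeries T)
  let Ω := FractionRing (PowerSeries T')
  have hjm : Function.Injective (PowerSeries.map j) := PowerSeries.map_injective j hj
  have hAinj : Function.Injective (algebraMap (PowerSeries T') Ω) :=
    IsFractionRing.injective (PowerSeries T') Ω
  have hgi : Function.Injective ((algebraMap (PowerSeries T') Ω).comp (PowerSeries.map j)) :=
    hAinj.comp hjm
  let ι : F →+* Ω := IsFractionRing.lift hgi
  let : Algebra F Ω := ι.toAlgebra
  have hι : ∀ f : PowerSeries T, algebraMap F Ω (algebraMap (PowerSeries T) F f) =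
      algebraMap (PowerSeries T') Ω (PowerSeries.map j f) := by
    intro f
    exact IsFractionRing.lift_algebraMap hgi f
  let : Algebra F0 Ω := ((algebraMap F Ω).comp (algebraMap F0 F)).toAlgebra
  have : IsScalarTower F0 F Ω := IsScalarTower.of_algebraMap_eq' rfl
  have hcΩ : CharZero Ω := by
    have : Function.Injective ((algebraMap (PowerSeries T') Ω).comp PowerSeries.C) :=
      hAinj.comp PowerSeries.C_injective
    exact charZero_of_injective_ringHom this
  have hcF : CharZero F := by
    constructor
    intro a b h
    have := congrArg (algebraMap F Ω) h
    rw [map_natCast, map_natCast] at this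
    exact_mod_cast this
  let ζΩ : Ω := algebraMap (PowerSeries T') Ω (PowerSeries.C ζ)
  have hζΩ : IsPrimitiveRoot ζΩ p := by
    have h1 : Function.Injective ((algebraMap (PowerSeries T') Ω).comp PowerSeries.C) :=
      hAinj.comp PowerSeries.C_injective
    exact hζ.map_of_injective h1
  have hint : IsIntegral F ζΩ := IsIntegral.of_pow hp.out.pos (by
    rw [hζΩ.pow_eq_one]; exact isIntegral_one)
  let F' := IntermediateField.adjoin F {ζΩ}
  have hcyc : IsCyclotomicExtension {p} F F' := by
    change IsCyclotomicExtension {p} F (IntermediateField.adjoin F {ζΩ}).toSubalgebra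
    rw [IntermediateField.adjoin_simple_toSubalgebra_of_isAlgebraic hint.isAlgebraic]
    exact hζΩ.adjoin_isCyclotomicExtension F
  have hfd : FiniteDimensional F F' := IsCyclotomicExtension.finiteDimensional {p} F F'
  have hgal : IsGalois F F' := IsCyclotomicExtension.isGalois {p} F F'
  have hcF' : CharZero F' := charZero_of_injective_algebraMap (algebraMap F F').injective
  have hcop : (Module.finrank F F').Coprime p := by
    have hle : Module.finrank F F' ≤ p - 1 := by
      rw [IntermediateField.adjoin.finrank hint, ← Nat.totient_prime hp.out, ← natDegree_cyclotomic p F]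
      refine natDegree_le_of_dvd (minpoly.dvd F ζΩ ?_) (cyclotomic_ne_zero p F)
      have := hζΩ.isRoot_cyclotomic hp.out.pos
      rw [IsRoot, ← map_cyclotomic p (algebraMap F Ω), eval_map_algebraMap] at this
      exact this
    have hpos : 0 < Module.finrank F F' := Module.finrank_pos
    have := hp.out.two_le
    exact Nat.Coprime.symm ((hp.out.coprime_iff_not_dvd).mpr (Nat.not_dvd_of_pos_of_lt hpos (by omega)))
  let ζ' : F' := ⟨ζΩ, IntermediateField.mem_adjoin_simple_self F ζΩ⟩
  have hζ' : IsPrimitiveRoot ζ' p := by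
    rw [← IsPrimitiveRoot.coe_submonoidClass_iff]
    exact hζΩ
  let φ : F := algebraMap (PowerSeries T) F (lac p T)
  let φ' : F' := algebraMap F F' φ
  let z : F' := zz p ζ' φ'
  have hzΩ : algebraMap F' Ω z = algebraMap (PowerSeries T') Ω (zz p (PowerSeries.C ζ) (lac p T')) := by
    rw [map_zz, map_zz]
    congr 1
    change algebraMap F Ω φ = _
    rw [hι, map_lac]
  obtain ⟨hz0, hcore⟩ := zz_core p ζ hζ
  have hz : z ≠ 0 := by
    intro h
    rw [h, map_zero] at hzΩ
    exact hz0 (hAinj (by rw [← hzΩ, map_zero]))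
  refine kummer_exists (F' := F') hp.out hcop ζ' hζ' z hz ?_ ?_
  · intro τ k hk
    have hkc : k.Coprime p := by
      have : IsPrimitiveRoot (ζ' ^ k) p := by
        rw [← hk]; exact hζ'.map_of_injective τ.injective
      exact (hζ'.pow_iff_coprime hp.out.pos k).mp this
    obtain ⟨u, hu, h⟩ := zz_equiv p ζ' φ' hζ'.pow_eq_one hz k hkc
    refine ⟨u, hu, ?_⟩
    rw [← h]
    have := map_zz p (τ : F' →+* F') ζ' φ'
    have h2 : (τ : F' →+* F') φ' = φ' := τ.commutes φ
    have h3 : (τ : F' →+* F') ζ' = ζ' ^ k := hk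
    rw [h2, h3] at this
    exact this
  · intro γ h hγ heq
    let : Algebra T[X] F' := ((algebraMap F0 F').comp (algebraMap T[X] F0)).toAlgebra
    have : IsScalarTower T[X] F0 F' := IsScalarTower.of_algebraMap_eq' rfl
    have h1 : IsAlgebraic T[X] γ := (IsFractionRing.isAlgebraic_iff T[X] F0 F').mpr hγ
    refine hcore (algebraMap F' Ω γ) (algebraMap F' Ω h) ?_ ?_
    · obtain ⟨P, hP0, hP⟩ := h1
      refine ⟨P.map (mapRingHom j), ?_, ?_⟩
      · rwa [Ne, Polynomial.map_eq_zero_iff (Polynomial.map_injective j hj)]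
      · rw [aeval_def, eval₂_map]
        have := congrArg (algebraMap F' Ω) hP
        rw [map_zero, aeval_def, hom_eval₂] at this
        rw [← this]
        congr 1
        refine RingHom.ext fun q => ?_
        change algebraMap T'[X] Ω (q.map j) = algebraMap F Ω (algebraMap F0 F (algebraMap T[X] F0 q))
        rw [← IsScalarTower.algebraMap_apply T[X] F0 F,
          IsScalarTower.algebraMap_apply T[X] (PowerSeries T) F, hι,
          IsScalarTower.algebraMap_apply T'[X] (PowerSeries T') Ω]
        congr 1
        exact (Polynomial.polynomial_map_coe (φ := j) (f := q))
    · rw [← hzΩ, heq, map_mul, map_pow]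

end PGC

namespace PGC

theorem charZero_of {T : Type} [CommRing T] [IsDomain T] [IsLocalRing T] (p : ℕ) (hp : p.Prime)
    [CharP (IsLocalRing.ResidueField T) p] (h : (p : T) ≠ 0) : CharZero T := by
  rcases CharP.exists' T with h0 | ⟨q, hq, hcq⟩
  · exact h0
  · exfalso
    have h1 : (q : IsLocalRing.ResidueField T) = 0 := by
      rw [← map_natCast (IsLocalRing.residue T), CharP.cast_eq_zero T q, map_zero]
    have h2 := (CharP.cast_eq_zero_iff _ p q).mp h1
    have h3 := (Nat.prime_dvd_prime_iff_eq hp hq.out).mp h2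
    subst h3
    exact h (CharP.cast_eq_zero T p)

theorem isFrac (T : Type) [CommRing T] [IsDomain T] :
    @IsFractionRing (Polynomial T) _ (RatFunc (FractionRing T)) _
      ((algebraMap (Polynomial (FractionRing T)) (RatFunc (FractionRing T))).comp
        (Polynomial.mapRingHom (algebraMap T (FractionRing T)))).toAlgebra := by
  letI : Algebra (Polynomial T) (RatFunc (FractionRing T)) :=
    ((algebraMap (Polynomial (FractionRing T)) (RatFunc (FractionRing T))).comp
        (Polynomial.mapRingHom (algebraMap T (FractionRing T)))).toAlgebra
  have hTK : Function.Injective (algebraMap T (FractionRing T)) := IsFractionRing.injective T _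
  have hinj : Function.Injective (algebraMap (Polynomial T) (RatFunc (FractionRing T))) :=
    (IsFractionRing.injective (Polynomial (FractionRing T)) (RatFunc (FractionRing T))).comp
      (Polynomial.map_injective _ hTK)
  have hfs : FaithfulSMul (Polynomial T) (RatFunc (FractionRing T)) :=
    (faithfulSMul_iff_algebraMap_injective _ _).mpr hinj
  have hden : ∀ f : Polynomial (FractionRing T), ∃ (b : T) (g : Polynomial T), b ≠ 0 ∧
      g.map (algebraMap T (FractionRing T)) = Polynomial.C (algebraMap T _ b) * f := by
    intro f
    obtain ⟨b, hb⟩ := IsLocalization.integerNormalization_map_to_map (nonZeroDivisors T) f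
    refine ⟨b, _, nonZeroDivisors.ne_zero b.2, hb.trans ?_⟩
    rw [← Polynomial.smul_eq_C_mul, algebraMap_smul]
  apply IsFractionRing.of_field
  intro u
  obtain ⟨f, g, hg, rfl⟩ := IsFractionRing.div_surjective (A := Polynomial (FractionRing T)) u
  obtain ⟨b, f1, hb, hf1⟩ := hden f
  obtain ⟨c, g1, hc, hg1⟩ := hden g
  refine ⟨f1 * Polynomial.C c, g1 * Polynomial.C b, ?_⟩
  have hdef : ∀ q : Polynomial T, algebraMap (Polynomial T) (RatFunc (FractionRing T)) q =
      algebraMap (Polynomial (FractionRing T)) (RatFunc (FractionRing T))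
        (q.map (algebraMap T (FractionRing T))) := fun q => rfl
  rw [hdef, hdef]
  have hb0 : Polynomial.C (algebraMap T (FractionRing T) b) ≠ 0 := by
    rw [Ne, Polynomial.C_eq_zero]; exact fun h => hb (hTK (h.trans (map_zero _).symm))
  have hc0 : Polynomial.C (algebraMap T (FractionRing T) c) ≠ 0 := by
    rw [Ne, Polynomial.C_eq_zero]; exact fun h => hc (hTK (h.trans (map_zero _).symm))
  have hA : ∀ q : Polynomial (FractionRing T), q ≠ 0 →
      algebraMap (Polynomial (FractionRing T)) (RatFunc (FractionRing T)) q ≠ 0 := fun q hq h =>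
    hq (IsFractionRing.injective (Polynomial (FractionRing T)) (RatFunc (FractionRing T))
      (h.trans (map_zero _).symm))
  rw [Polynomial.map_mul, Polynomial.map_mul, Polynomial.map_C, Polynomial.map_C, hf1, hg1]
  simp only [map_mul]
  have h1 := hA _ hb0
  have h2 := hA _ hc0
  have h3 := hA _ (nonZeroDivisors.ne_zero hg)
  field_simp

end PGC

open scoped TensorProduct

attribute [local instance] Algebra.TensorProduct.rightAlgebra

/-- Failure of descent in residue characteristic `p`: if `T` is a complete discrete
valuation ring with residue field of characteristic `p > 0` and fraction field `K`, then
there is a degree `p` Galois field extension of `Frac(T⟦x⟧)` which is not induced by any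
degree `p` field extension of the rational function field `K(x)`, where `K(x)` embeds in
`Frac(T⟦x⟧)` via `T[x] ⊆ T⟦x⟧`. -/
theorem point_to_global_counterexample_char_p
    (p : ℕ) (hp : p.Prime)
    (T : Type) [CommRing T] [IsDomain T] [IsDiscreteValuationRing T]
    [IsAdicComplete (IsLocalRing.maximalIdeal T) T]
    [CharP (IsLocalRing.ResidueField T) p]
    (ψ : RatFunc (FractionRing T) →+* FractionRing (PowerSeries T))
    (hψ : ∀ q : Polynomial T,
      ψ (algebraMap (Polynomial (FractionRing T)) (RatFunc (FractionRing T))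
          (q.map (algebraMap T (FractionRing T)))) =
        algebraMap (PowerSeries T) (FractionRing (PowerSeries T))
          (Polynomial.coeToPowerSeries.ringHom q)) :
    letI : Algebra (RatFunc (FractionRing T)) (FractionRing (PowerSeries T)) :=
      ψ.toAlgebra
    ∃ (E_P : Type) (_ : Field E_P) (_ : Algebra (FractionRing (PowerSeries T)) E_P),
      IsGalois (FractionRing (PowerSeries T)) E_P ∧
      Module.finrank (FractionRing (PowerSeries T)) E_P = p ∧
      ¬ ∃ (E : Type) (_ : Field E) (_ : Algebra (RatFunc (FractionRing T)) E),
          Module.finrank (RatFunc (FractionRing T)) E = p ∧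
          Nonempty ((E ⊗[RatFunc (FractionRing T)] FractionRing (PowerSeries T))
            ≃ₐ[FractionRing (PowerSeries T)] E_P) := by
  let F := FractionRing (PowerSeries T)
  let K := FractionRing T
  let F0 := RatFunc K
  have hpF : Fact p.Prime := ⟨hp⟩
  let : Algebra F0 F := ψ.toAlgebra
  have hTK : Function.Injective (algebraMap T K) := IsFractionRing.injective T K
  let : Algebra (Polynomial T) F0 := ((algebraMap (Polynomial K) F0).comp
    (Polynomial.mapRingHom (algebraMap T K))).toAlgebra
  have htow : IsScalarTower (Polynomial T) F0 F := by
    apply IsScalarTower.of_algebraMap_eq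
    intro q
    rw [IsScalarTower.algebraMap_apply (Polynomial T) (PowerSeries T) F]
    exact (hψ q).symm
  have hfrac : IsFractionRing (Polynomial T) F0 := PGC.isFrac T
  have hmain : ∃ (EP : Type) (_ : Field EP) (_ : Algebra F EP)
      (_ : Algebra F0 EP) (_ : IsScalarTower F0 F EP),
      IsGalois F EP ∧ Module.finrank F EP = p ∧
      ∀ e : EP, IsSeparable F0 e → e ∈ (algebraMap F EP).range := by
    by_cases hpT : (p : T) = 0
    · have hcT : CharP T p := PGC.charP_of_prime hp hpT
      have hcF : CharP F p := charP_of_injective_ringHom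
        (f := (algebraMap (PowerSeries T) F).comp PowerSeries.C)
        ((IsFractionRing.injective (PowerSeries T) F).comp PowerSeries.C_injective) p
      have hcF0 : CharP F0 p := charP_of_injective_ringHom
        (f := (algebraMap (Polynomial T) F0).comp Polynomial.C)
        ((IsFractionRing.injective (Polynomial T) F0).comp Polynomial.C_injective) p
      obtain ⟨t, ht⟩ := IsDiscreteValuationRing.exists_irreducible T
      exact PGC.as_exists (F0 := F0) _ (fun b h hb => PGC.core_char_p (F0 := F0) t ht b h hb)
    · have hcT : CharZero T := PGC.charZero_of p hp hpT
      exact PGC.mixed_exists (F0 := F0) p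
  obtain ⟨EP, _, _, _, _, hG, hr, hE⟩ := hmain
  refine ⟨EP, inferInstance, inferInstance, hG, hr, ?_⟩
  rintro ⟨E, _, _, hEr, ⟨φ⟩⟩
  exact PGC.descent p hp.one_lt hEr hr hE φ
end

section
/- Let k be a field of characteristic p > 0 and let α ∈ k((x)) be an element transcendental over the subfield k(x) of rational functions. Then E := k((x))((t))[Y]/(Y^p − Y − α·t^{−1}) is a Galois field extension of k((x))((t)) of degree p, and E is not induced by any degree p field extension of k((t))(x): there is no field extension E' of k((t))(x) with [E' : k((t))(x)] = p such that E' ⊗_{k((t))(x)} k((x))((t)) ≅ E as k((x))((t))-algebras. -/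
open Polynomial

open scoped TensorProduct

attribute [local instance] Algebra.TensorProduct.rightAlgebra

/-- The ring homomorphism `k₁((t)) →+* k₂((t))` applying a ring homomorphism
`f : k₁ →+* k₂` to each coefficient of a Laurent series. -/
noncomputable def lsMap {R S : Type*} [CommRing R] [CommRing S]
    (f : R →+* S) : LaurentSeries R →+* LaurentSeries S where
  toFun x := x.map f
  map_one' := by ext g; by_cases h : g = 0 <;> simp [h]
  map_mul' x y := HahnSeries.map_mul f.toNonUnitalRingHom
  map_zero' := by ext g; simp
  map_add' x y := HahnSeries.map_add f.toAddMonoidHom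

/-- A type synonym for the Laurent series field `k((x))`, so that `k((x))((t))` is
`LaurentSeries (Kx k)`. -/
def Kx (k : Type) [Field k] : Type := LaurentSeries k

noncomputable instance (k : Type) [Field k] : Field (Kx k) :=
  inferInstanceAs (Field (LaurentSeries k))

/-- The coercion `RatFunc F → LaurentSeries F` as bundled alg hom (formerly in Mathlib). -/
noncomputable def RatFunc.coeAlgHom (F : Type*) [Field F] : RatFunc F →ₐ[F[X]] LaurentSeries F :=
  RatFunc.liftAlgHom (Algebra.ofId _ _) <|
    nonZeroDivisors_le_comap_nonZeroDivisors_of_injective _ <|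
      Polynomial.algebraMap_hahnSeries_injective _

/-- The canonical embedding of the rational function field `k(x)` into `k((x))`. -/
noncomputable instance (k : Type) [Field k] : Algebra (RatFunc k) (Kx k) :=
  (((RatFunc.coeAlgHom k).toRingHom : RatFunc k →+* Kx k)).toAlgebra

theorem as_natDegree {K : Type*} [Field K] {p : ℕ} (hp : p.Prime) (a : K) :
    (X ^ p - X - C a : K[X]).natDegree = p ∧ (X ^ p - X - C a : K[X]).Monic := by
  have h : (X + C a : K[X]).degree < p := by
    rw [degree_X_add_C]; exact_mod_cast hp.one_lt
  rw [sub_sub]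
  exact ⟨by rw [natDegree_sub_eq_left_of_natDegree_lt] <;> simp [hp.one_lt],
    monic_X_pow_sub (by rw [degree_X_add_C]; exact_mod_cast hp.one_lt)⟩

theorem as_irreducible {K : Type*} [Field K] {p : ℕ} (hp : p.Prime) [CharP K p] (a : K)
    (h : ∀ b : K, b ^ p - b ≠ a) : Irreducible (X ^ p - X - C a : K[X]) := by
  have := Fact.mk hp
  obtain ⟨hd, hm⟩ := as_natDegree hp a
  set f : K[X] := X ^ p - X - C a with hf
  have hnu : ¬ IsUnit f := fun hu => by
    have := natDegree_eq_zero_of_isUnit hu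
    exact hp.ne_zero (hd ▸ this)
  obtain ⟨g, hgm, hgi, hgf⟩ := exists_monic_irreducible_factor f hnu
  let Ω := AlgebraicClosure K
  have : CharP Ω p := charP_of_injective_algebraMap (algebraMap K Ω).injective p
  have hroot : ∀ r : Ω, aeval r g = 0 → r ^ p - r = algebraMap K Ω a := by
    intro r hr
    have : aeval r f = 0 := by
      obtain ⟨q, hq⟩ := hgf
      rw [hq, map_mul, hr, zero_mul]
    simpa [hf, sub_eq_zero] using this
  obtain ⟨y, hy⟩ := IsAlgClosed.exists_aeval_eq_zero Ω g (degree_pos_of_irreducible hgi).ne'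
  have hyp := hroot y hy
  have hsplit : (g.map (algebraMap K Ω)).Splits := IsAlgClosed.splits _
  have hgm' := hgm.map (algebraMap K Ω)
  have hnc := hsplit.nextCoeff_eq_neg_sum_roots_of_monic hgm'
  have hcard := hsplit.natDegree_eq_card_roots
  set R := (g.map (algebraMap K Ω)).roots with hR
  have hbot : ∀ r ∈ R, r - y ∈ (algebraMap K Ω).fieldRange := by
    intro r hr
    have h1 : aeval r g = 0 := by
      have := (mem_roots'.1 hr).2
      simpa [IsRoot, eval_map_algebraMap] using this
    have h2 := hroot r h1
    have : r - y ∈ (⊥ : Subfield Ω) := by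
      rw [Subfield.mem_bot_iff_pow_eq_self Ω p, sub_pow_char]
      linear_combination h2 - hyp
    exact (bot_le : (⊥ : Subfield Ω) ≤ _) this
  have hsum : (R.map (fun r => r - y)).sum ∈ (algebraMap K Ω).fieldRange := by
    apply multiset_sum_mem
    intro c hc
    obtain ⟨r, hr, rfl⟩ := Multiset.mem_map.1 hc
    exact hbot r hr
  have hsum2 : (R.map (fun r => r - y)).sum = R.sum - (g.natDegree : Ω) * y := by
    rw [Multiset.sum_map_sub]
    simp [← hcard]
  have hRs : R.sum ∈ (algebraMap K Ω).fieldRange := by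
    rw [nextCoeff_map (algebraMap K Ω).injective] at hnc
    have : R.sum = algebraMap K Ω (- g.nextCoeff) := by rw [map_neg, hnc, neg_neg]
    rw [this]; exact ⟨_, rfl⟩
  have hdy : (g.natDegree : Ω) * y ∈ (algebraMap K Ω).fieldRange := by
    have := sub_mem hRs hsum
    rw [hsum2] at this
    simpa using this
  have hle : g.natDegree ≤ p := hd ▸ natDegree_le_of_dvd hgf hm.ne_zero
  rcases hle.lt_or_eq with hlt | heq
  · exfalso
    have hne : (g.natDegree : Ω) ≠ 0 := by
      intro h0
      have := (CharP.cast_eq_zero_iff Ω p _).1 h0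
      exact absurd (Nat.le_of_dvd hgi.natDegree_pos this) (by omega)
    have hyK : y ∈ (algebraMap K Ω).fieldRange := by
      have h1 : (g.natDegree : Ω) ∈ (algebraMap K Ω).fieldRange := natCast_mem _ _
      have := mul_mem (inv_mem h1) hdy
      rwa [inv_mul_cancel_left₀ hne] at this
    obtain ⟨b, rfl⟩ := hyK
    apply h b
    apply (algebraMap K Ω).injective
    simpa using hyp
  · have : f = g := eq_of_monic_of_dvd_of_natDegree_le hgm hm hgf (by omega)
    rwa [this]

theorem as_galois {K : Type*} [Field K] {p : ℕ} (hp : p.Prime) [CharP K p] (a : K)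
    [Fact (Irreducible (X ^ p - X - C a : K[X]))] :
    IsGalois K (AdjoinRoot (X ^ p - X - C a : K[X])) ∧
      Module.finrank K (AdjoinRoot (X ^ p - X - C a : K[X])) = p ∧
      (AdjoinRoot.root (X ^ p - X - C a : K[X])) ^ p - AdjoinRoot.root (X ^ p - X - C a : K[X])
        = algebraMap K _ a := by
  have := Fact.mk hp
  obtain ⟨hd, hm⟩ := as_natDegree hp a
  have hroot : (AdjoinRoot.root (X ^ p - X - C a : K[X])) ^ p
      - AdjoinRoot.root (X ^ p - X - C a : K[X]) = algebraMap K _ a := by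
    have := AdjoinRoot.eval₂_root (X ^ p - X - C a : K[X])
    rw [← AdjoinRoot.algebraMap_eq] at this
    simpa [sub_eq_zero] using this
  refine ⟨?_, ?_, hroot⟩
  · have hsep : (X ^ p - X - C a : K[X]).Separable := by
      rw [separable_def]
      have : derivative (X ^ p - X - C a : K[X]) = -1 := by
        rw [derivative_sub, derivative_sub, derivative_X_pow]; simp
      rw [this]
      exact isCoprime_one_right.neg_right
    have : (X ^ p - X - C a : K[X]).IsSplittingField K (AdjoinRoot (X ^ p - X - C a : K[X])) := by
      constructor
      · set E := AdjoinRoot (X ^ p - X - C a : K[X])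
        set y := AdjoinRoot.root (X ^ p - X - C a : K[X])
        have : CharP E p := charP_of_injective_algebraMap (algebraMap K E).injective p
        let _ := ZMod.algebra E p
        have h1 : ((X ^ p - X : (ZMod p)[X]).map (algebraMap (ZMod p) E)).Splits :=
          (GaloisField.splits_zmod_X_pow_sub_X p).map _
        have h2 := h1.comp_X_sub_C y
        have h3 : (X ^ p - X - C a : K[X]).map (algebraMap K E) =
            ((X ^ p - X : (ZMod p)[X]).map (algebraMap (ZMod p) E)).comp (X - C y) := by
          simp only [Polynomial.map_sub, Polynomial.map_pow, map_X, map_C, sub_comp, pow_comp,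
            X_comp, sub_pow_char, ← C_pow]
          have h4 : C (algebraMap K E a) = C (y ^ p) - C y := by rw [← C_sub, hroot]
          rw [h4]
          ring
        rw [h3]
        exact h2
      · rw [eq_top_iff, ← AdjoinRoot.adjoinRoot_eq_top]
        apply Algebra.adjoin_mono
        rintro _ rfl
        rw [mem_rootSet]
        refine ⟨hm.ne_zero, ?_⟩
        simp [hroot]
    exact IsGalois.of_separable_splitting_field hsep
  · rw [(AdjoinRoot.powerBasis hm.ne_zero).finrank, AdjoinRoot.powerBasis_dim, hd]

theorem core {F K E : Type*} [Field F] [Field K] [Field E] [Algebra F K] [Algebra K E]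
    [Algebra F E] [IsScalarTower F K E] [FiniteDimensional K E] [IsGalois K E]
    (S : Set E) (hS : Submodule.span K S = ⊤) (hSa : ∀ s ∈ S, IsAlgebraic F s)
    (y : E) (hy : ∀ τ : E ≃ₐ[K] E, IsAlgebraic F (y - τ y)) :
    ∃ b : K, IsAlgebraic F (y - algebraMap K E b) := by
  obtain ⟨θ, hθ, hT⟩ : ∃ θ ∈ S, Algebra.trace K E θ ≠ 0 := by
    by_contra! hc
    apply Algebra.trace_ne_zero K E
    apply LinearMap.ext_on hS
    intro s hs
    simpa using hc s hs
  have h1 : IsAlgebraic F (∑ τ : E ≃ₐ[K] E, τ θ * (y - τ y)) := by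
    rw [← mem_algebraicClosure_iff]
    refine sum_mem fun τ _ => mul_mem ?_ ?_
    · exact mem_algebraicClosure_iff.2 ((hSa θ hθ).algHom (τ.restrictScalars F).toAlgHom)
    · exact mem_algebraicClosure_iff.2 (hy τ)
  have h3 : IsAlgebraic F (∑ τ : E ≃ₐ[K] E, τ θ) := by
    rw [← mem_algebraicClosure_iff]
    refine sum_mem fun τ _ => ?_
    exact mem_algebraicClosure_iff.2 ((hSa θ hθ).algHom (τ.restrictScalars F).toAlgHom)
  have h2 : (∑ τ : E ≃ₐ[K] E, τ θ * (y - τ y)) =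
      algebraMap K E (Algebra.trace K E θ) * y - algebraMap K E (Algebra.trace K E (θ * y)) := by
    rw [trace_eq_sum_automorphisms, trace_eq_sum_automorphisms, Finset.sum_mul,
      ← Finset.sum_sub_distrib]
    refine Finset.sum_congr rfl fun τ _ => ?_
    rw [map_mul]; ring
  have hT' : algebraMap K E (Algebra.trace K E θ) ≠ 0 := by simpa using hT
  refine ⟨Algebra.trace K E (θ * y) / Algebra.trace K E θ, ?_⟩
  have h4 : y - algebraMap K E (Algebra.trace K E (θ * y) / Algebra.trace K E θ) =
      (∑ τ : E ≃ₐ[K] E, τ θ)⁻¹ * ∑ τ : E ≃ₐ[K] E, τ θ * (y - τ y) := by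
    rw [h2, ← trace_eq_sum_automorphisms, map_div₀]
    field_simp
  rw [h4]
  exact h3.inv.mul h1

theorem ls_pow_lt {L : Type*} [Field L] {p : ℕ} (hp : p.Prime) (b : LaurentSeries L) (j : ℤ)
    (hb : ∀ i < j, b.coeff i = 0) (N : ℤ) (hN : N < p * j) : (b ^ p).coeff N = 0 := by
  by_cases h0 : b = 0
  · simp [h0, hp.ne_zero]
  have : j ≤ b.order := by
    by_contra! hlt
    exact HahnSeries.coeff_order_eq_zero.not.2 h0 (hb _ hlt)
  apply HahnSeries.coeff_eq_zero_of_lt_order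
  rw [HahnSeries.order_pow, nsmul_eq_mul]
  have hp0 : (0 : ℤ) < p := by exact_mod_cast hp.pos
  nlinarith

theorem ls_coeff_pow {L : Type*} [Field L] {p : ℕ} (hp : p.Prime) [CharP (LaurentSeries L) p]
    (m : ℕ) : ∀ (b : LaurentSeries L) (j : ℤ), (∀ i < j, b.coeff i = 0) → 
    ∀ N : ℤ, N < p * (j + m) → (∀ n, N = p * n → (b ^ p).coeff N = b.coeff n ^ p) ∧
      ((¬ (p : ℤ) ∣ N) → (b ^ p).coeff N = 0) := by
  have := Fact.mk hp
  have hp0 : (0 : ℤ) < p := by exact_mod_cast hp.pos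
  induction m with
  | zero =>
    intro b j hb N hN
    simp only [Nat.cast_zero, add_zero] at hN
    rw [ls_pow_lt hp b j hb N hN]
    refine ⟨?_, fun _ => rfl⟩
    rintro n rfl
    rw [hb n (by nlinarith), zero_pow hp.ne_zero]
  | succ m ih =>
    intro b j hb N hN
    set b' := b - HahnSeries.single j (b.coeff j) with hb'
    have hbb : b = HahnSeries.single j (b.coeff j) + b' := by rw [hb']; ring
    have h0 : ∀ i < j + 1, b'.coeff i = 0 := by
      intro i hi
      rcases eq_or_ne i j with rfl | hne
      · simp [hb']
      · simp [hb', hne, hb i (by omega)]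
    obtain ⟨h1, h2⟩ := ih b' (j + 1) h0 N (by push_cast at hN; linarith)
    have h3 : b ^ p = HahnSeries.single (p * j) (b.coeff j ^ p) + b' ^ p := by
      conv_lhs => rw [hbb]
      rw [add_pow_char, HahnSeries.single_pow, nsmul_eq_mul]
    constructor
    · intro n hn
      rw [h3, HahnSeries.coeff_add, h1 n hn]
      subst hn
      rcases eq_or_ne n j with rfl | hne
      · simp [h0 n (by omega), hp.ne_zero]
      · have : (p : ℤ) * n ≠ p * j := by simpa [hp.ne_zero] using hne
        simp [this, hb', hne]
    · intro hn
      rw [h3, HahnSeries.coeff_add, h2 hn]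
      have : N ≠ p * j := fun h => hn ⟨j, h⟩
      simp [this]

theorem ls_lower {L : Type*} [Field L] (b : LaurentSeries L) :
    ∃ j : ℤ, ∀ i < j, b.coeff i = 0 :=
  ⟨b.order, fun _ hi => HahnSeries.coeff_eq_zero_of_lt_order hi⟩

theorem ls_coeff_pow' {L : Type*} [Field L] {p : ℕ} (hp : p.Prime) [CharP (LaurentSeries L) p]
    (b : LaurentSeries L) (N : ℤ) : (∀ n, N = p * n → (b ^ p).coeff N = b.coeff n ^ p) ∧
      ((¬ (p : ℤ) ∣ N) → (b ^ p).coeff N = 0) := by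
  obtain ⟨j, hj⟩ := ls_lower b
  refine ls_coeff_pow hp (|N| - j + 1).toNat b j hj N ?_
  have h1 : |N| + 1 ≤ j + ((|N| - j + 1).toNat : ℤ) := by omega
  have h2 := le_abs_self N
  have h3 := abs_nonneg N
  have hp0 : (1 : ℤ) ≤ p := by exact_mod_cast hp.one_lt.le
  nlinarith

/-- If `α/t - (b^p - b)` has all coefficients in `A`, `A` closed under `p`-th roots, `α ∈ A`. -/
theorem ls_descent {L : Type*} [Field L] {p : ℕ} (hp : p.Prime) [CharP (LaurentSeries L) p]
    (A : Subfield L) (hA : ∀ z : L, z ^ p ∈ A → z ∈ A) (α : L) (b : LaurentSeries L)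
    (hc : ∀ n, (HahnSeries.single (-1 : ℤ) α - (b ^ p - b)).coeff n ∈ A) : α ∈ A := by
  have key : ∀ m : ℕ, b.coeff (-(p : ℤ) ^ (m + 1)) ∈ A → b.coeff (-(p : ℤ) ^ m) ∈ A := by
    intro m hm
    apply hA
    have h1 := (ls_coeff_pow' hp b (-(p : ℤ) ^ (m + 1))).1 (-(p : ℤ) ^ m) (by ring)
    have h2 := hc (-(p : ℤ) ^ (m + 1))
    have hne : (-(p : ℤ) ^ (m + 1)) ≠ -1 := by
      have : (1 : ℤ) < (p : ℤ) ^ (m + 1) := by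
        exact_mod_cast Nat.one_lt_pow (by omega) hp.one_lt
      omega
    rw [HahnSeries.coeff_sub, HahnSeries.coeff_sub, h1, HahnSeries.coeff_single_of_ne hne] at h2
    have := sub_mem hm h2
    simpa using this
  obtain ⟨j, hj⟩ := ls_lower b
  have hbig : ∃ M : ℕ, b.coeff (-(p : ℤ) ^ M) ∈ A := by
    refine ⟨(-j).toNat, ?_⟩
    rw [hj _ ?_]
    · exact zero_mem _
    · have h1 : ((-j).toNat : ℤ) < (p : ℤ) ^ (-j).toNat := by
        exact_mod_cast Nat.lt_pow_self hp.one_lt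
      omega
  obtain ⟨M, hM⟩ := hbig
  have h0 : b.coeff (-(p : ℤ) ^ 0) ∈ A := by
    induction M with
    | zero => exact hM
    | succ M ih => exact ih (key M hM)
  have h1 := (ls_coeff_pow' hp b (-1)).2 (by
    rw [Int.dvd_neg]
    intro h
    have := Int.natCast_dvd_natCast.1 (by simpa using h : (p : ℤ) ∣ ((1 : ℕ) : ℤ))
    exact hp.one_lt.ne' (Nat.dvd_one.1 this))
  have h2 := hc (-1)
  rw [HahnSeries.coeff_sub, HahnSeries.coeff_sub, h1, HahnSeries.coeff_single_same] at h2
  rw [pow_zero] at h0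
  have := sub_mem h2 h0
  simpa using this

/-- the Laurent series with coefficients in `A` -/
noncomputable def lsSub {L : Type*} [Field L] (A : Subfield L) : Subfield (LaurentSeries L) :=
  (lsMap A.subtype).fieldRange

theorem mem_lsSub {L : Type*} [Field L] (A : Subfield L) (f : LaurentSeries L) :
    f ∈ lsSub A ↔ ∀ n, f.coeff n ∈ A := by
  constructor
  · rintro ⟨g, rfl⟩ n
    exact (g.coeff n).2
  · intro h
    refine ⟨⟨fun n => ⟨f.coeff n, h n⟩, ?_⟩, ?_⟩
    · convert f.isPWO_support using 1
      ext n
      simp only [Function.mem_support, HahnSeries.mem_support, ne_eq]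
      exact not_congr (by rw [Subtype.ext_iff]; rfl)
    · ext n
      rfl

theorem lead_alg {L : Type*} [Field L] (A : Subfield L) (c : LaurentSeries L) (hc0 : c ≠ 0)
    (hc : IsAlgebraic (lsSub A) c) : IsAlgebraic A (c.coeff c.order) := by
  obtain ⟨Q, hQ, hQc⟩ := hc
  set v := c.order
  have hne : Q.support.Nonempty := by simpa using hQ
  obtain ⟨i0, hi0, hmin⟩ := Q.support.exists_min_image
    (fun i => (Q.coeff i : LaurentSeries L).order + i * v) hne
  set w := (Q.coeff i0 : LaurentSeries L).order + i0 * v with hw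
  have hcA : ∀ i n, (Q.coeff i : LaurentSeries L).coeff n ∈ A := fun i n =>
    (mem_lsSub A _).1 (Q.coeff i).2 n
  let R : A[X] := ∑ i ∈ Q.support,
    monomial i (⟨(Q.coeff i : LaurentSeries L).coeff (w - i * v), hcA _ _⟩ : A)
  refine ⟨R, ?_, ?_⟩
  · intro h0
    have h1 : R.coeff i0 = 0 := by rw [h0, coeff_zero]
    simp only [R, finsetSum_coeff, coeff_monomial, Finset.sum_ite_eq', hi0, if_true] at h1
    have h2 := congrArg Subtype.val h1
    simp only [hw, add_sub_cancel_right] at h2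
    have : (Q.coeff i0 : LaurentSeries L) ≠ 0 := by
      simpa using hi0
    exact HahnSeries.coeff_order_eq_zero.not.2 this h2
  · have h1 : (∑ i ∈ Q.support, (Q.coeff i : LaurentSeries L) * c ^ i).coeff w = 0 := by
      rw [aeval_def, eval₂_eq_sum, Polynomial.sum] at hQc
      erw [hQc]; rfl
    simp only [R, map_sum, aeval_monomial]
    rw [HahnSeries.coeff_sum] at h1
    rw [← h1]
    refine Finset.sum_congr rfl fun i hi => ?_
    have hq : (Q.coeff i : LaurentSeries L) ≠ 0 := by simpa using hi
    have hci : c ^ i ≠ 0 := pow_ne_zero _ hc0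
    have hord : (c ^ i).order = i * v := by rw [HahnSeries.order_pow, nsmul_eq_mul]
    have hlc : (c ^ i).coeff (i * v) = c.coeff v ^ i := by
      rw [← hord, ← HahnSeries.leadingCoeff_eq, ← HahnSeries.leadingCoeff_eq]
      clear * -
      induction i with
      | zero => simp
      | succ i ih => rw [pow_succ, pow_succ, HahnSeries.leadingCoeff_mul, ih]
    have hle := hmin i hi
    change (Q.coeff i : LaurentSeries L).coeff (w - i * v) * c.coeff v ^ i = _
    rcases hle.lt_or_eq with hlt | heq
    · rw [HahnSeries.coeff_eq_zero_of_lt_order (by omega), zero_mul,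
        HahnSeries.coeff_eq_zero_of_lt_order]
      rw [HahnSeries.order_mul hq hci, hord]; exact hlt
    · have e1 : w = (Q.coeff i : LaurentSeries L).order + (c ^ i).order := by
        rw [hord]; exact heq
      rw [e1, HahnSeries.coeff_mul_order_add_order, HahnSeries.leadingCoeff_eq,
        HahnSeries.leadingCoeff_eq, hord, hlc, add_sub_cancel_right]

theorem coeff_alg {L : Type*} [Field L] (A : Subfield L) (hA : ∀ z : L, IsAlgebraic A z → z ∈ A)
    (c : LaurentSeries L) (hc : IsAlgebraic (lsSub A) c) (n : ℤ) : c.coeff n ∈ A := by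
  obtain ⟨j, hj⟩ := ls_lower c
  suffices h : ∀ m : ℕ, ∀ i < j + m, c.coeff i ∈ A from
    h (n - j + 1).toNat n (by omega)
  intro m
  induction m with
  | zero =>
    intro i hi
    rw [hj i (by simpa using hi)]
    exact zero_mem _
  | succ m ih =>
    intro i hi
    rcases lt_or_eq_of_le (show i ≤ j + m by push_cast at hi; omega) with hlt | rfl
    · exact ih i hlt
    set n := j + (m : ℤ)
    by_cases h0 : c.coeff n = 0
    · rw [h0]; exact zero_mem _
    set d := HahnSeries.truncLT n c with hd
    have hdm : d ∈ lsSub A := by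
      rw [mem_lsSub]
      intro i
      rw [hd, HahnSeries.coeff_truncLT]
      split_ifs with h
      · exact ih i h
      · exact zero_mem _
    have hcd : (c - d).coeff n = c.coeff n := by simp [hd]
    have hcd0 : c - d ≠ 0 := fun h => h0 (by rw [← hcd, h]; rfl)
    have hord : (c - d).order = n := by
      apply le_antisymm
      · exact HahnSeries.order_le_of_coeff_ne_zero (by rw [hcd]; exact h0)
      · by_contra! hlt
        apply HahnSeries.coeff_order_eq_zero.not.2 hcd0
        rw [HahnSeries.coeff_sub, hd, HahnSeries.coeff_truncLT, if_pos hlt, sub_self]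
    have halg : IsAlgebraic (lsSub A) (c - d) :=
      hc.sub (isAlgebraic_algebraMap (⟨d, hdm⟩ : lsSub A))
    have := lead_alg A (c - d) hcd0 halg
    rw [hord, hcd] at this
    exact hA _ this

theorem tensor_part {F K E E' : Type*} [Field F] [Field K] [Field E] [Field E'] [Algebra F K]
    [Algebra K E] [Algebra F E'] [FiniteDimensional F E'] [FiniteDimensional K E] [IsGalois K E]
    (e : (E' ⊗[F] K) ≃ₐ[K] E)
    (y : E) (hy : ∀ τ : E ≃ₐ[K] E, ∃ n : (⊥ : Subfield E), y - τ y = n) (p : ℕ) (a : K)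
    (hya : y ^ p - y = algebraMap K E a)
    (hpow : ∀ b : K, (y - algebraMap K E b) ^ p = y ^ p - algebraMap K E b ^ p) :
    ∃ b : K, IsAlgebraic F (a - (b ^ p - b)) := by
  let _ : Algebra F E := ((algebraMap K E).comp (algebraMap F K)).toAlgebra
  have : IsScalarTower F K E := IsScalarTower.of_algebraMap_eq fun _ => rfl
  let i : E' →ₐ[F] E :=
    { (e : (E' ⊗[F] K) →+* E).comp
        (Algebra.TensorProduct.includeLeft : E' →ₐ[F] (E' ⊗[F] K)).toRingHom with
      commutes' := fun r => by
        have h1 : algebraMap F E r = e (algebraMap K _ (algebraMap F K r)) := by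
          rw [e.commutes]; rfl
        rw [h1]
        change e (algebraMap F E' r ⊗ₜ 1) = e (1 ⊗ₜ (algebraMap F K r))
        rw [Algebra.algebraMap_eq_smul_one, Algebra.algebraMap_eq_smul_one,
          TensorProduct.smul_tmul] }
  have hspan : Submodule.span K (Set.range i) = ⊤ := by
    rw [eq_top_iff]
    rintro z -
    obtain ⟨w, rfl⟩ := e.surjective z
    induction w using TensorProduct.induction_on with
    | zero => rw [map_zero]; exact zero_mem _
    | add u v hu hv => rw [map_add]; exact add_mem hu hv
    | tmul u v =>
      have : u ⊗ₜ[F] v = v • (u ⊗ₜ[F] (1 : K)) := by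
        rw [Algebra.smul_def]
        change _ = (1 ⊗ₜ v) * _
        rw [Algebra.TensorProduct.tmul_mul_tmul, one_mul, mul_one]
      rw [this, map_smul]
      exact Submodule.smul_mem _ _ (Submodule.subset_span ⟨u, rfl⟩)
  obtain ⟨b, hb⟩ := core (F := F) (K := K) (E := E) (Set.range i) hspan (by
    rintro _ ⟨u, rfl⟩
    exact (Algebra.IsAlgebraic.isAlgebraic u).algHom i) y (by
    intro τ
    obtain ⟨n, hn⟩ := hy τ
    rw [hn]
    have h1 : (n : E) ∈ (algebraMap F E).fieldRange := (bot_le : (⊥ : Subfield E) ≤ _) n.2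
    obtain ⟨m, hm⟩ := h1
    rw [← hm]
    exact isAlgebraic_algebraMap m)
  refine ⟨b, ?_⟩
  have h2 : IsAlgebraic F (algebraMap K E (a - (b ^ p - b))) := by
    have h3 : algebraMap K E (a - (b ^ p - b)) =
        (y - algebraMap K E b) ^ p - (y - algebraMap K E b) := by
      rw [hpow]
      simp only [map_sub, map_pow, ← hya]
      ring
    rw [h3]
    exact (hb.pow p).sub hb
  exact (isAlgebraic_algebraMap_iff (algebraMap K E).injective).1 h2

theorem kx_C (k : Type) [Field k] (a : k) :
    algebraMap (RatFunc k) (Kx k) (RatFunc.C a) = (HahnSeries.C a : LaurentSeries k) := by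
  change RatFunc.coeAlgHom k (RatFunc.C a) = _
  rw [← RatFunc.algebraMap_C, (RatFunc.coeAlgHom k).commutes]
  simp

theorem kx_X (k : Type) [Field k] :
    algebraMap (RatFunc k) (Kx k) RatFunc.X =
      (HahnSeries.single (1 : ℤ) (1 : k) : LaurentSeries k) := by
  change RatFunc.coeAlgHom k RatFunc.X = _
  rw [← RatFunc.algebraMap_X, (RatFunc.coeAlgHom k).commutes]
  simp

theorem psi_mem (k : Type) [Field k]
    (ψ : RatFunc (LaurentSeries k) →+* LaurentSeries (Kx k))
    (hψC : ∀ a : LaurentSeries k,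
      ψ (RatFunc.C a) = lsMap ((HahnSeries.C : k →+* Kx k)) a)
    (hψX : ψ RatFunc.X = HahnSeries.C ((HahnSeries.single (1 : ℤ) (1 : k) : Kx k)))
    (A : Subfield (Kx k)) (hA : ∀ z, algebraMap (RatFunc k) (Kx k) z ∈ A)
    (f : RatFunc (LaurentSeries k)) : ψ f ∈ lsSub A := by
  have hpoly : ∀ q : (LaurentSeries k)[X], ψ (algebraMap _ _ q) ∈ lsSub A := by
    intro q
    induction q using Polynomial.induction_on' with
    | add u v hu hv => rw [map_add, map_add]; exact add_mem hu hv
    | monomial n a =>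
      rw [← C_mul_X_pow_eq_monomial, map_mul, map_pow, RatFunc.algebraMap_C, RatFunc.algebraMap_X,
        map_mul, map_pow, hψC, hψX]
      refine mul_mem ?_ (pow_mem ?_ _)
      · refine (mem_lsSub A _).2 fun n => ?_
        change (HahnSeries.C (a.coeff n) : LaurentSeries k) ∈ A
        have := hA (RatFunc.C (a.coeff n))
        rwa [kx_C] at this
      · refine (mem_lsSub A _).2 fun n => ?_
        have hX := hA RatFunc.X
        rw [kx_X] at hX
        by_cases hn : n = 0
        · subst hn
          have h0 : (HahnSeries.C (HahnSeries.single (1 : ℤ) (1 : k) : LaurentSeries k) :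
              LaurentSeries (LaurentSeries k)).coeff 0 = HahnSeries.single (1 : ℤ) (1 : k) :=
            HahnSeries.coeff_single_same _ _
          exact (congrArg (· ∈ A) h0).mpr hX
        · have h0 : (HahnSeries.C (HahnSeries.single (1 : ℤ) (1 : k) : LaurentSeries k) :
              LaurentSeries (LaurentSeries k)).coeff n = 0 :=
            HahnSeries.coeff_single_of_ne hn
          have h1 := zero_mem A
          exact (congrArg (· ∈ A) h0).mpr h1
  rw [← RatFunc.num_div_denom f, map_div₀]
  exact div_mem (hpoly _) (hpoly _)

set_option maxHeartbeats 1000000 in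
/-- For `k` of characteristic `p` and `α ∈ k((x))` transcendental over `k(x)`, the
Artin–Schreier extension `E = k((x))((t))[Y]/(Y^p - Y - α·t⁻¹)` is Galois of degree `p`
over `k((x))((t))` but is not induced by any degree `p` field extension of
`k((t))(x)`. -/
theorem artinSchreier_transcendental_not_induced
    (p : ℕ) (hp : p.Prime) (k : Type) [Field k] [CharP k p]
    (α : Kx k) (hα : Transcendental (RatFunc k) α)
    (ψ : RatFunc (LaurentSeries k) →+* LaurentSeries (Kx k))
    (hψC : ∀ a : LaurentSeries k,
      ψ (RatFunc.C a) = lsMap ((HahnSeries.C : k →+* Kx k)) a)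
    (hψX : ψ RatFunc.X = HahnSeries.C ((HahnSeries.single (1 : ℤ) (1 : k) : Kx k))) :
    letI : Algebra (RatFunc (LaurentSeries k)) (LaurentSeries (Kx k)) := ψ.toAlgebra
    Irreducible (X ^ p - X - C (HahnSeries.single (-1 : ℤ) α) :
        Polynomial (LaurentSeries (Kx k))) ∧
    (∀ [Fact (Irreducible (X ^ p - X - C (HahnSeries.single (-1 : ℤ) α) :
        Polynomial (LaurentSeries (Kx k))))],
      IsGalois (LaurentSeries (Kx k))
        (AdjoinRoot (X ^ p - X - C (HahnSeries.single (-1 : ℤ) α) :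
          Polynomial (LaurentSeries (Kx k)))) ∧
      Module.finrank (LaurentSeries (Kx k))
        (AdjoinRoot (X ^ p - X - C (HahnSeries.single (-1 : ℤ) α) :
          Polynomial (LaurentSeries (Kx k)))) = p) ∧
    ¬ ∃ (E' : Type) (_ : Field E') (_ : Algebra (RatFunc (LaurentSeries k)) E'),
        Module.finrank (RatFunc (LaurentSeries k)) E' = p ∧
        Nonempty ((E' ⊗[RatFunc (LaurentSeries k)] LaurentSeries (Kx k))
          ≃ₐ[LaurentSeries (Kx k)]
          AdjoinRoot (X ^ p - X - C (HahnSeries.single (-1 : ℤ) α) :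
            Polynomial (LaurentSeries (Kx k)))) := by
  letI : Algebra (RatFunc (LaurentSeries k)) (LaurentSeries (Kx k)) := ψ.toAlgebra
  have := Fact.mk hp
  have hcL : CharP (Kx k) p :=
    charP_of_injective_ringHom (f := (HahnSeries.C : k →+* LaurentSeries k)) (RingHom.injective _) p
  have hcK : CharP (LaurentSeries (Kx k)) p :=
    charP_of_injective_ringHom (f := (HahnSeries.C : Kx k →+* LaurentSeries (Kx k)))
      (RingHom.injective _) p
  let A0 := algebraicClosure (RatFunc k) (Kx k)
  let A : Subfield (Kx k) := A0.toSubfield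
  have hA : ∀ z : Kx k, IsAlgebraic A z → z ∈ A := by
    intro z hz
    have hz' : IsAlgebraic A0 z := hz
    exact mem_algebraicClosure_iff.2 (hz'.restrictScalars (RatFunc k))
  have hAp : ∀ z : Kx k, z ^ p ∈ A → z ∈ A := by
    intro z hz
    exact hA z (IsAlgebraic.of_pow hp.pos (isAlgebraic_algebraMap (⟨z ^ p, hz⟩ : A)))
  have hαA : α ∉ A := fun h => hα (mem_algebraicClosure_iff.1 h)
  have hirr : Irreducible (X ^ p - X - C (HahnSeries.single (-1 : ℤ) α) :
        Polynomial (LaurentSeries (Kx k))) := by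
    apply as_irreducible hp
    intro b hb
    apply hαA
    apply ls_descent hp A hAp α b
    intro n
    rw [hb, sub_self]
    exact zero_mem _
  refine ⟨hirr, ?_, ?_⟩
  · intro _
    obtain ⟨h1, h2, -⟩ := as_galois hp (HahnSeries.single (-1 : ℤ) α)
    exact ⟨h1, h2⟩
  · rintro ⟨E', _, _, hfin, ⟨e⟩⟩
    have := Fact.mk hirr
    obtain ⟨h1, h2, h3⟩ := as_galois hp (HahnSeries.single (-1 : ℤ) α)
    set a : LaurentSeries (Kx k) := HahnSeries.single (-1 : ℤ) α with ha
    have : FiniteDimensional (RatFunc (LaurentSeries k)) E' :=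
      FiniteDimensional.of_finrank_pos (by rw [hfin]; exact hp.pos)
    have : FiniteDimensional (LaurentSeries (Kx k)) (AdjoinRoot (X ^ p - X - C a)) :=
      FiniteDimensional.of_finrank_pos (by rw [h2]; exact hp.pos)
    have hcE : CharP (AdjoinRoot (X ^ p - X - C a)) p :=
      charP_of_injective_algebraMap
        (algebraMap (LaurentSeries (Kx k)) (AdjoinRoot (X ^ p - X - C a))).injective p
    obtain ⟨b, hb⟩ := tensor_part e (AdjoinRoot.root (X ^ p - X - C a)) (by
      intro τ
      refine ⟨⟨_, ?_⟩, rfl⟩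
      rw [Subfield.mem_bot_iff_pow_eq_self _ p, sub_pow_char, ← map_pow]
      have h4 := congrArg τ h3
      rw [map_sub, τ.commutes] at h4
      linear_combination h3 - h4) p a h3 (fun b => sub_pow_char _ _)
    apply hαA
    apply ls_descent hp A hAp α b
    apply coeff_alg A hA
    obtain ⟨P, hP, hPb⟩ := hb
    let φ : RatFunc (LaurentSeries k) →+* lsSub A :=
      ψ.codRestrict (lsSub A) (psi_mem k ψ hψC hψX A (fun z => A0.algebraMap_mem z))
    refine ⟨P.map φ, (Polynomial.map_ne_zero_iff φ.injective).2 hP, ?_⟩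
    rw [aeval_def, eval₂_map]
    exact hPb
end
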